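/- Under a scaling of the heterogeneous key predistribution model with on/off channels satisfying the scaling condition Λ_1(n) = α_n λ_1(n) = c_n (log n)/n with lim_{n→∞} c_n = c, if c > 1 and in addition P_n ≥ σ n for all n for some σ > 0 and p_11(n) = ω(1/(n α_n)) (i.e., n α_n p_11(n) → ∞), then the probability that the random graph G(n; μ, K_n, P_n, α_n) is connected tends to 1 as n → ∞. -/

import Mathlib

open Filter

/-- Probability that a uniformly random `b`-subset of a `P`-set avoids a fixed `a`-subset. -/
noncomputable def avoidProb (P a b : ℕ) : ℝ := ((P - a).choose b : ℝ) / (P.choose b : ℝ)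

/-- `p_{ab}` : probability that independent uniformly random key rings of sizes
`a` and `b` (from a pool of size `P`) intersect. -/
noncomputable def pEdge (P a b : ℕ) : ℝ := 1 - avoidProb P a b

/-- `λ_i` : mean edge probability of a class-`i` node in the inhomogeneous random key graph. -/
noncomputable def lamb {r : ℕ} (μ : Fin (r + 1) → ℝ) (K : Fin (r + 1) → ℕ) (P : ℕ)
    (i : Fin (r + 1)) : ℝ :=
  ∑ j, μ j * pEdge P (K i) (K j)

/-- A configuration of the model: a class for each vertex, a key ring for each vertex,
and an on/off state for each (unordered) channel. -/
abbrev Config (n r P : ℕ) := (Fin n → Fin (r + 1)) × (Fin n → Finset (Fin P)) × (Sym2 (Fin n) → Bool)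

/-- Probability weight of a configuration: classes are i.i.d. with law `μ`; given its class `i`,
a vertex's key ring is uniform among the `C(P, K i)` subsets of size `K i`; channels over
distinct pairs are i.i.d. Bernoulli(`α`) (diagonal channel variables are forced to `false`). -/
noncomputable def wt {n r P : ℕ} (μ : Fin (r + 1) → ℝ) (K : Fin (r + 1) → ℕ) (α : ℝ)
    (c : Config n r P) : ℝ :=
  (∏ x : Fin n, μ (c.1 x)) *
    (∏ x : Fin n, if (c.2.1 x).card = K (c.1 x) then ((P.choose (K (c.1 x)) : ℝ))⁻¹ else 0) *
    (∏ e : Sym2 (Fin n),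
      if e.IsDiag then (if c.2.2 e then 0 else 1) else (if c.2.2 e then α else 1 - α))

open Classical in
/-- Probability of an event under the heterogeneous key predistribution model
with on/off channels. -/
noncomputable def pr {n r P : ℕ} (μ : Fin (r + 1) → ℝ) (K : Fin (r + 1) → ℕ) (α : ℝ)
    (E : Config n r P → Prop) : ℝ :=
  ∑ c : Config n r P, if E c then wt μ K α c else 0

/-- Two vertices are adjacent iff their key rings intersect and the channel between them is on. -/
def Adj {n r P : ℕ} (c : Config n r P) (x y : Fin n) : Prop :=
  x ≠ y ∧ ((c.2.1 x) ∩ (c.2.1 y)).Nonempty ∧ c.2.2 s(x, y) = true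

/-- The random graph `G(n; μ, K, P, α)` as a simple graph. -/
def graphOf {n r P : ℕ} (c : Config n r P) : SimpleGraph (Fin n) :=
  SimpleGraph.fromRel (fun x y => ((c.2.1 x) ∩ (c.2.1 y)).Nonempty ∧ c.2.2 s(x, y) = true)

/-- A vertex is isolated if it has no neighbours. -/
def Isolated {n r P : ℕ} (c : Config n r P) (x : Fin n) : Prop := ∀ y, ¬ Adj c x y

/-- The graph has no isolated nodes. -/
def NoIsolatedNodes {n r P : ℕ} (c : Config n r P) : Prop := ∀ x, ¬ Isolated c x

/-!
A disconnected graph has a set `S` of `l ≤ n / 2` vertices without an edge to its complement.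
Conditionally on the rings inside `S`, the other vertices miss `S` independently of each other, so a
union bound over `S` reduces everything to the probability that a single vertex misses `S`. This
probability is small provided every subset `T` of `S` holds nearly `|T| * K₁` keys, or a fixed
fraction of the pool. Since `P ≥ σ n`, and since `n α p₁₁ → ∞` forces `K₁ → ∞`, a first moment
bound over sets of keys shows that the rings are spread out in this sense with high probability.
Averaging over the set `T` of vertices of `S` whose channel to the outer vertex is on then bounds
the missing probability by roughly `∑ j, μ j * exp (-l α p₁ⱼ)`.

As long as `l * Λ₁` is small this is about `exp (-l * Λ₁)`, and `c > 1` makes the terms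
`n.choose l * exp (-l * n * Λ₁)` summable with vanishing sum. Beyond that it is bounded away from
`1`, which beats the entropy of choosing `S` while `l ≤ δ n`. For `δ n < l ≤ n / 2` it is close
to `0`, because `n α p₁₁ → ∞`.
-/

section AvoidanceProbabilities

lemma choose_div_choose_eq_prod (m N k : ℕ) :
    (m.choose k / N.choose k : ℝ) = ∏ i ∈ Finset.range k, ((m - i : ℕ) / (N - i : ℕ) : ℝ) := by
  rw [Finset.prod_div_distrib, ← Nat.cast_prod, ← Nat.cast_prod, ← Nat.descFactorial_eq_prod_range,
    ← Nat.descFactorial_eq_prod_range, Nat.descFactorial_eq_factorial_mul_choose,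
    Nat.descFactorial_eq_factorial_mul_choose, Nat.cast_mul, Nat.cast_mul,
    mul_div_mul_left _ _ (Nat.cast_ne_zero.mpr k.factorial_ne_zero)]

lemma antitone_sub_div_sub {m N : ℕ} (h : m ≤ N) :
    Antitone fun i : ℕ => ((m - i : ℕ) / (N - i : ℕ) : ℝ) := by
  intro i j hij
  dsimp only
  rcases le_or_gt N j with hj | hj
  · rw [Nat.sub_eq_zero_of_le (h.trans hj), Nat.cast_zero, zero_div]
    positivity
  · have hNj : (0 : ℝ) < (N - j : ℕ) := Nat.cast_pos.mpr (Nat.sub_pos_of_lt hj)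
    have hNi : (0 : ℝ) < (N - i : ℕ) := Nat.cast_pos.mpr (Nat.sub_pos_of_lt (hij.trans_lt hj))
    rw [div_le_div_iff₀ hNj hNi]
    norm_cast
    rcases le_or_gt m j with hm | hm
    · simp [Nat.sub_eq_zero_of_le hm]
    · zify [hij.trans hj.le, hij.trans hm.le, hj.le, hm.le]
      have : (m : ℤ) ≤ N := mod_cast h
      have : (i : ℤ) ≤ j := mod_cast hij
      nlinarith

lemma choose_div_choose_le_pow {m N : ℕ} (h : m ≤ N) (k : ℕ) :
    (m.choose k / N.choose k : ℝ) ≤ (m / N : ℝ) ^ k := by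
  rw [choose_div_choose_eq_prod]
  calc ∏ i ∈ Finset.range k, ((m - i : ℕ) / (N - i : ℕ) : ℝ)
      ≤ ∏ _i ∈ Finset.range k, (m / N : ℝ) :=
        Finset.prod_le_prod (fun i _ => by positivity)
          fun i _ => antitone_sub_div_sub h (Nat.zero_le i)
    _ = _ := by rw [Finset.prod_const, Finset.card_range]

lemma prod_range_pow_le_prod_range_pow {f : ℕ → ℝ} (hf : Antitone f) (hf0 : ∀ i, 0 ≤ f i)
    {m n : ℕ} (hmn : m ≤ n) :
    (∏ i ∈ Finset.range n, f i) ^ m ≤ (∏ i ∈ Finset.range m, f i) ^ n := by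
  induction n, hmn using Nat.le_induction with
  | base => exact le_rfl
  | succ n hmn ih =>
    have hlast : f n ^ m ≤ ∏ i ∈ Finset.range m, f i := by
      rw [← Finset.card_range m, ← Finset.prod_const, Finset.card_range]
      exact Finset.prod_le_prod (fun _ _ => hf0 n)
        fun i hi => hf ((Finset.mem_range.mp hi).le.trans hmn)
    rw [Finset.prod_range_succ, mul_pow, pow_succ]
    exact mul_le_mul ih hlast (pow_nonneg (hf0 n) m)
      (pow_nonneg (Finset.prod_nonneg fun i _ => hf0 i) n)

lemma avoidProb_nonneg (P a b : ℕ) : 0 ≤ avoidProb P a b := by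
  unfold avoidProb
  positivity

lemma avoidProb_le_one (P a b : ℕ) : avoidProb P a b ≤ 1 :=
  div_le_one_of_le₀ (Nat.cast_le.mpr (Nat.choose_le_choose b (Nat.sub_le P a))) (Nat.cast_nonneg _)

lemma avoidProb_zero {P b : ℕ} (hb : b ≤ P) : avoidProb P 0 b = 1 :=
  div_self (Nat.cast_ne_zero.mpr (Nat.choose_pos hb).ne')

lemma avoidProb_comm {P a b : ℕ} (ha : a ≤ P) (hb : b ≤ P) : avoidProb P a b = avoidProb P b a := by
  have hPa : (P.choose a : ℝ) ≠ 0 := Nat.cast_ne_zero.mpr (Nat.choose_pos ha).ne'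
  have hPb : (P.choose b : ℝ) ≠ 0 := Nat.cast_ne_zero.mpr (Nat.choose_pos hb).ne'
  have hswap : P.choose a * (P - a).choose b = P.choose b * (P - b).choose a := by
    have h₁ := Nat.choose_mul (n := P) (Nat.le_add_right a b)
    have h₂ := Nat.choose_mul (n := P) (Nat.le_add_left b a)
    rw [Nat.add_sub_cancel_left] at h₁
    rw [Nat.add_sub_cancel_right] at h₂
    rw [← h₁, ← h₂, Nat.choose_symm_add]
  rw [avoidProb, avoidProb, div_eq_div_iff hPb hPa, mul_comm, mul_comm _ (P.choose b : ℝ)]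
  exact_mod_cast hswap

lemma avoidProb_le_exp {P k u : ℕ} {η : ℝ} (hu : u ≤ P) (h : η * P ≤ u) (hP : 0 < P) :
    avoidProb P u k ≤ Real.exp (-(η * k)) := by
  have hP' : (0 : ℝ) < P := Nat.cast_pos.mpr hP
  have hratio : ((P - u : ℕ) : ℝ) / P ≤ Real.exp (-η) := by
    rw [Nat.cast_sub hu, sub_div, div_self hP'.ne']
    linarith [(le_div_iff₀ hP').mpr h, Real.add_one_le_exp (-η)]
  calc avoidProb P u k ≤ (((P - u : ℕ) : ℝ) / P) ^ k := choose_div_choose_le_pow (Nat.sub_le P u) k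
    _ ≤ Real.exp (-η) ^ k := by gcongr
    _ = Real.exp (-(η * k)) := by rw [← Real.exp_nat_mul]; ring_nf

lemma avoidProb_anti_left {P a a' : ℕ} (h : a ≤ a') (b : ℕ) :
    avoidProb P a' b ≤ avoidProb P a b := by
  unfold avoidProb
  gcongr

lemma avoidProb_anti_right {P a b b' : ℕ} (ha : a ≤ P) (hb : b ≤ b') (hb' : b' ≤ P) :
    avoidProb P a b' ≤ avoidProb P a b := by
  rw [avoidProb_comm ha hb', avoidProb_comm ha (hb.trans hb')]
  exact avoidProb_anti_left hb a

/-- Log-concavity of the avoidance probability in the size of the avoided set. -/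
lemma avoidProb_pow_le {P k K u : ℕ} (hK : K ≤ u) (hu : u ≤ P) (hk : k ≤ P) :
    avoidProb P u k ^ K ≤ avoidProb P K k ^ u := by
  rw [avoidProb_comm hu hk, avoidProb_comm (hK.trans hu) hk, avoidProb, avoidProb,
    choose_div_choose_eq_prod, choose_div_choose_eq_prod]
  exact prod_range_pow_le_prod_range_pow (antitone_sub_div_sub (Nat.sub_le P k))
    (fun _ => by positivity) hK

lemma avoidProb_le_rpow {P k K u : ℕ} (hK0 : 0 < K) (hK : K ≤ u) (hu : u ≤ P) (hk : k ≤ P) :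
    avoidProb P u k ≤ avoidProb P K k ^ (u / K : ℝ) := by
  have hpow := Real.rpow_le_rpow (pow_nonneg (avoidProb_nonneg P u k) K)
    (avoidProb_pow_le hK hu hk) (inv_nonneg.mpr (Nat.cast_nonneg K))
  rwa [Real.pow_rpow_inv_natCast (avoidProb_nonneg P u k) hK0.ne', ← Real.rpow_natCast _ u,
    ← Real.rpow_mul (avoidProb_nonneg P K k), ← div_eq_mul_inv] at hpow

lemma avoidProb_le_pow {P k K u m : ℕ} {s : ℝ} (hs0 : 0 ≤ s) (hs1 : s ≤ 1) (hK0 : 0 < K)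
    (hK : K ≤ u) (hu : u ≤ P) (hk : k ≤ P) (hm : s * m * K ≤ u) :
    avoidProb P u k ≤ (1 - s * pEdge P K k) ^ m := by
  have ha0 := avoidProb_nonneg P K k
  have hexponent : avoidProb P K k ^ (u / K : ℝ) ≤ avoidProb P K k ^ (s * m) := by
    have hKr : (0 : ℝ) < K := Nat.cast_pos.mpr hK0
    have hur : (0 : ℝ) < u := Nat.cast_pos.mpr (hK0.trans_le hK)
    rcases ha0.eq_or_lt with h0 | h0
    · rw [← h0, Real.zero_rpow (by positivity)]
      exact Real.rpow_nonneg le_rfl _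
    · exact Real.rpow_le_rpow_of_exponent_ge h0 (avoidProb_le_one P K k)
        ((le_div_iff₀ hKr).mpr hm)
  have hbernoulli : avoidProb P K k ^ s ≤ 1 - s * pEdge P K k := by
    have := rpow_one_add_le_one_add_mul_self (s := -pEdge P K k)
      (by unfold pEdge; linarith) hs0 hs1
    rwa [mul_neg, ← sub_eq_add_neg, ← sub_eq_add_neg, pEdge, sub_sub_cancel, ← pEdge] at this
  calc avoidProb P u k ≤ avoidProb P K k ^ (u / K : ℝ) := avoidProb_le_rpow hK0 hK hu hk
    _ ≤ avoidProb P K k ^ (s * m) := hexponent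
    _ = (avoidProb P K k ^ s) ^ m := by rw [Real.rpow_mul ha0, Real.rpow_natCast]
    _ ≤ (1 - s * pEdge P K k) ^ m := by gcongr

lemma pEdge_nonneg (P a b : ℕ) : 0 ≤ pEdge P a b := sub_nonneg.mpr (avoidProb_le_one P a b)

lemma pEdge_le_one (P a b : ℕ) : pEdge P a b ≤ 1 := sub_le_self 1 (avoidProb_nonneg P a b)

lemma pEdge_mono_right {P a b b' : ℕ} (ha : a ≤ P) (hb : b ≤ b') (hb' : b' ≤ P) :
    pEdge P a b ≤ pEdge P a b' := sub_le_sub_left (avoidProb_anti_right ha hb hb') 1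

lemma choose_le_choose_sub_add (P a k : ℕ) :
    P.choose (k + 1) ≤ (P - a).choose (k + 1) + a * (P - 1).choose k := by
  induction a with
  | zero => simp
  | succ a ih =>
    have hpascal : (P - a).choose (k + 1) ≤ (P - (a + 1)).choose (k + 1) + (P - 1).choose k := by
      rcases Nat.eq_zero_or_pos (P - a) with h | h
      · simp [h]
      · obtain ⟨d, hd⟩ := Nat.exists_eq_add_of_lt h
        rw [zero_add] at hd
        rw [← Nat.sub_sub, hd, Nat.choose_succ_succ, Nat.add_sub_cancel, add_comm]
        gcongr
        omega
    linarith

lemma pEdge_le {P b : ℕ} (a : ℕ) (hb : b ≤ P) : pEdge P a b ≤ a * b / P := by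
  rcases b with - | k
  · simp [pEdge, avoidProb]
  have hP : (0 : ℝ) < P := Nat.cast_pos.mpr (by omega)
  have hC : (0 : ℝ) < P.choose (k + 1) := Nat.cast_pos.mpr (Nat.choose_pos hb)
  have hunion : (P.choose (k + 1) : ℝ) ≤ (P - a).choose (k + 1) + a * (P - 1).choose k :=
    mod_cast choose_le_choose_sub_add P a k
  have habsorb : (P : ℝ) * (P - 1).choose k = P.choose (k + 1) * (k + 1) := by
    have := Nat.add_one_mul_choose_eq (P - 1) k
    rw [Nat.sub_add_cancel (by omega)] at this
    exact_mod_cast this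
  rw [pEdge, avoidProb, one_sub_div hC.ne', div_le_div_iff₀ hC hP, Nat.cast_succ]
  calc (P.choose (k + 1) - (P - a).choose (k + 1) : ℝ) * P
      ≤ a * (P - 1).choose k * P := by gcongr; linarith
    _ = a * (k + 1) * P.choose (k + 1) := by linear_combination (a : ℝ) * habsorb

end AvoidanceProbabilities

section ProductWeights

variable {ι A R : Type*} [Fintype ι] [DecidableEq ι] [Fintype A] [CommSemiring R]

lemma sum_prod_eq_prod_sum_of_forall_mem (w : ι → A → R) (T : Finset ι) (p : ι → A → Prop)
    [∀ x a, Decidable (p x a)] (hw : ∀ x ∉ T, ∑ a, w x a = 1) {q : (ι → A) → Prop}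
    [DecidablePred q] (hq : ∀ f, q f ↔ ∀ x ∈ T, p x (f x)) :
    ∑ f : ι → A, (if q f then ∏ x, w x (f x) else 0)
      = ∏ x ∈ T, ∑ a, if p x a then w x a else 0 := by
  have hterm (f : ι → A) : (if q f then ∏ x, w x (f x) else 0)
      = ∏ x, if x ∈ T → p x (f x) then w x (f x) else 0 := by
    rw [Fintype.prod_ite_zero]
    simp only [hq]
  simp only [hterm]
  rw [← Fintype.prod_sum fun x a => if x ∈ T → p x a then w x a else 0,
    ← Finset.prod_subset (Finset.subset_univ T)]
  · exact Finset.prod_congr rfl fun x hx => by simp only [hx, forall_const]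
  · exact fun x _ hx => by simp only [hx, false_imp_iff, if_true, hw x hx]

lemma sum_pi_eq_sum_subtype_pi (p : ι → Prop) [DecidablePred p] (w : ι → A → R)
    (φ : ({x // p x} → A) → R) (ψ : {x // ¬p x} → ({x // p x} → A) → A → R) :
    ∑ f : ι → A, (∏ x, w x (f x)) *
        (φ (fun x => f x) * ∏ v : {x // ¬p x}, ψ v (fun x => f x) (f v))
      = ∑ g : {x // p x} → A, (∏ x : {x // p x}, w x (g x)) *
          (φ g * ∏ v : {x // ¬p x}, ∑ a, w v a * ψ v g a) := by
  rw [← (Equiv.piEquivPiSubtypeProd p fun _ => A).symm.sum_comp, Fintype.sum_prod_type]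
  refine Finset.sum_congr rfl fun g _ => ?_
  have hinside (h : {x // ¬p x} → A) (x : {x // p x}) :
      (Equiv.piEquivPiSubtypeProd p fun _ => A).symm (g, h) x = g x := by
    rw [Equiv.piEquivPiSubtypeProd_symm_apply, dif_pos x.2]
  have houtside (h : {x // ¬p x} → A) (x : {x // ¬p x}) :
      (Equiv.piEquivPiSubtypeProd p fun _ => A).symm (g, h) x = h x := by
    rw [Equiv.piEquivPiSubtypeProd_symm_apply, dif_neg x.2]
  simp only [← Fintype.prod_subtype_mul_prod_subtype p, hinside, houtside, Fintype.prod_sum,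
    Finset.mul_sum, Finset.prod_mul_distrib]
  exact Finset.sum_congr rfl fun h _ => by ring

end ProductWeights

/-- The standing assumptions on one set of parameters: `μ` is a probability vector, `α` is a
probability, and the ring sizes lie between `K 0` and the pool size `P`. -/
structure Admissible {r : ℕ} (μ : Fin (r + 1) → ℝ) (K : Fin (r + 1) → ℕ) (P : ℕ) (α : ℝ) :
    Prop where
  weight_nonneg : ∀ i, 0 ≤ μ i
  sum_weight : ∑ i, μ i = 1
  channel_mem : α ∈ Set.Icc (0 : ℝ) 1
  ringSize_zero_le : ∀ j, K 0 ≤ K j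
  ringSize_le : ∀ j, K j ≤ P

/-- The law of the pair (class, key ring) of a single vertex. -/
noncomputable def vertexWeight {r P : ℕ} (μ : Fin (r + 1) → ℝ) (K : Fin (r + 1) → ℕ)
    (a : Fin (r + 1) × Finset (Fin P)) : ℝ :=
  μ a.1 * if a.2.card = K a.1 then ((P.choose (K a.1) : ℝ))⁻¹ else 0

/-- The law of a single channel variable; as in `wt`, diagonal channels are off. -/
noncomputable def channelWeight {n : ℕ} (α : ℝ) (e : Sym2 (Fin n)) (b : Bool) : ℝ :=
  if e.IsDiag then (if b then 0 else 1) else (if b then α else 1 - α)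

/-- The configuration with vertex data `f` and channel states `B`. Grouping the class and the ring
of a vertex makes the law of a configuration a product over vertices and channels. -/
def assemble {n r P : ℕ} (f : Fin n → Fin (r + 1) × Finset (Fin P)) (B : Sym2 (Fin n) → Bool) :
    Config n r P :=
  (fun x => (f x).1, fun x => (f x).2, B)

section Model

variable {n r P : ℕ} {μ : Fin (r + 1) → ℝ} {K : Fin (r + 1) → ℕ} {α : ℝ}

lemma vertexWeight_nonneg (hμ : ∀ i, 0 ≤ μ i) (a : Fin (r + 1) × Finset (Fin P)) :
    0 ≤ vertexWeight μ K a := by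
  unfold vertexWeight
  exact mul_nonneg (hμ _) (by positivity)

lemma sum_vertexWeight_subset (μ : Fin (r + 1) → ℝ) (K : Fin (r + 1) → ℕ) (X : Finset (Fin P)) :
    ∑ a : Fin (r + 1) × Finset (Fin P), (if a.2 ⊆ X then vertexWeight μ K a else 0)
      = ∑ j, μ j * (X.card.choose (K j) / P.choose (K j) : ℝ) := by
  rw [Fintype.sum_prod_type]
  refine Finset.sum_congr rfl fun j _ => ?_
  have hterm (R : Finset (Fin P)) : (if R ⊆ X then vertexWeight μ K (j, R) else 0)
      = if R ∈ Finset.powersetCard (K j) X then μ j * (P.choose (K j) : ℝ)⁻¹ else 0 := by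
    simp only [vertexWeight, Finset.mem_powersetCard, ite_and, mul_ite, mul_zero]
  simp only [hterm]
  rw [Finset.sum_ite_mem, Finset.univ_inter, Finset.sum_const, Finset.card_powersetCard,
    nsmul_eq_mul, div_eq_mul_inv]
  ring

lemma sum_vertexWeight_disjoint (μ : Fin (r + 1) → ℝ) (K : Fin (r + 1) → ℕ)
    (U : Finset (Fin P)) :
    ∑ a : Fin (r + 1) × Finset (Fin P), (if Disjoint U a.2 then vertexWeight μ K a else 0)
      = ∑ j, μ j * avoidProb P U.card (K j) := by
  have h := sum_vertexWeight_subset μ K Uᶜ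
  rw [Finset.card_compl, Fintype.card_fin] at h
  simpa only [avoidProb, disjoint_comm (a := U), ← le_compl_iff_disjoint_right] using h

lemma sum_vertexWeight (h : Admissible μ K P α) :
    ∑ a : Fin (r + 1) × Finset (Fin P), vertexWeight μ K a = 1 := by
  have hempty := sum_vertexWeight_disjoint (P := P) μ K ∅
  simp only [Finset.disjoint_empty_left, if_true, Finset.card_empty] at hempty
  simp only [hempty, avoidProb_zero (h.ringSize_le _), mul_one, h.sum_weight]

lemma wt_assemble (μ : Fin (r + 1) → ℝ) (K : Fin (r + 1) → ℕ) (α : ℝ)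
    (f : Fin n → Fin (r + 1) × Finset (Fin P)) (B : Sym2 (Fin n) → Bool) :
    wt μ K α (assemble f B) = (∏ x, vertexWeight μ K (f x)) * ∏ e, channelWeight α e (B e) := by
  simp only [wt, vertexWeight, channelWeight, Finset.prod_mul_distrib]
  rfl

open Classical in
lemma pr_eq_sum_assemble (μ : Fin (r + 1) → ℝ) (K : Fin (r + 1) → ℕ) (α : ℝ)
    (E : Config n r P → Prop) :
    pr μ K α E = ∑ f : Fin n → Fin (r + 1) × Finset (Fin P), (∏ x, vertexWeight μ K (f x)) *
      ∑ B, if E (assemble f B) then ∏ e, channelWeight α e (B e) else 0 := by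
  let split : (Fin n → Fin (r + 1) × Finset (Fin P)) × (Sym2 (Fin n) → Bool) ≃ Config n r P :=
    ((Equiv.arrowProdEquivProdArrow (Fin n) (fun _ => Fin (r + 1))
      fun _ => Finset (Fin P)).prodCongr (Equiv.refl _)).trans (Equiv.prodAssoc _ _ _)
  have hsplit (f : Fin n → Fin (r + 1) × Finset (Fin P)) (B : Sym2 (Fin n) → Bool) :
      split (f, B) = assemble f B := rfl
  rw [pr, ← split.sum_comp, Fintype.sum_prod_type]
  simp only [hsplit, wt_assemble, Finset.mul_sum, mul_ite, mul_zero]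

lemma sum_channelWeight (α : ℝ) (e : Sym2 (Fin n)) : ∑ b, channelWeight α e b = 1 := by
  by_cases he : e.IsDiag <;> simp [channelWeight, he]

lemma sum_prod_channelWeight (α : ℝ) :
    ∑ B : Sym2 (Fin n) → Bool, ∏ e, channelWeight α e (B e) = 1 := by
  rw [← Fintype.prod_sum fun e b => channelWeight α e b]
  exact Finset.prod_eq_one fun e _ => sum_channelWeight α e

lemma wt_nonneg (h : Admissible μ K P α) (c : Config n r P) : 0 ≤ wt μ K α c := by
  obtain ⟨hα0, hα1⟩ := h.channel_mem
  refine mul_nonneg (mul_nonneg ?_ ?_) ?_ <;> refine Finset.prod_nonneg fun _ _ => ?_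
  · exact h.weight_nonneg _
  · positivity
  · split_ifs <;> linarith

lemma card_ring_of_wt_ne_zero {c : Config n r P} (hc : wt μ K α c ≠ 0) (x : Fin n) :
    (c.2.1 x).card = K (c.1 x) := by
  by_contra hx
  refine hc (mul_eq_zero_of_left (mul_eq_zero_of_right _ ?_) _)
  exact Finset.prod_eq_zero (Finset.mem_univ x) (if_neg hx)

lemma pr_nonneg (h : Admissible μ K P α) (E : Config n r P → Prop) : 0 ≤ pr μ K α E :=
  Finset.sum_nonneg fun c _ => by
    split_ifs
    exacts [wt_nonneg h c, le_rfl]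

lemma pr_add_pr_not (h : Admissible μ K P α) (E : Config n r P → Prop) :
    pr μ K α E + pr μ K α (fun c => ¬ E c) = 1 := by
  classical
  have htotal : pr μ K α (fun _ : Config n r P => True) = 1 := by
    rw [pr_eq_sum_assemble]
    simp only [if_true, sum_prod_channelWeight, mul_one]
    rw [← Fintype.prod_sum fun (_ : Fin n) a => vertexWeight μ K a]
    simp only [sum_vertexWeight h, Finset.prod_const_one]
  rw [← htotal, pr, pr, pr, ← Finset.sum_add_distrib]
  refine Finset.sum_congr rfl fun c _ => ?_
  by_cases hE : E c <;> simp [hE]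

lemma pr_mono (h : Admissible μ K P α) {E E' : Config n r P → Prop}
    (hE : ∀ c, wt μ K α c ≠ 0 → E c → E' c) : pr μ K α E ≤ pr μ K α E' := by
  refine Finset.sum_le_sum fun c _ => ?_
  have hw := wt_nonneg h c
  have himp := hE c
  split_ifs <;> first | positivity | grind

lemma pr_or_le (h : Admissible μ K P α) (E E' : Config n r P → Prop) :
    pr μ K α (fun c => E c ∨ E' c) ≤ pr μ K α E + pr μ K α E' := by
  rw [pr, pr, pr, ← Finset.sum_add_distrib]
  refine Finset.sum_le_sum fun c _ => ?_
  have hw := wt_nonneg h c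
  by_cases hE : E c <;> by_cases hE' : E' c <;> simp [hE, hE', hw]

lemma pr_exists_le (h : Admissible μ K P α) {β : Type*} (s : Finset β)
    (E : β → Config n r P → Prop) :
    pr μ K α (fun c => ∃ i ∈ s, E i c) ≤ ∑ i ∈ s, pr μ K α (E i) := by
  classical
  induction s using Finset.induction_on with
  | empty => simp [pr]
  | insert i s hi ih =>
    simp only [Finset.exists_mem_insert, Finset.sum_insert hi]
    exact (pr_or_le h _ _).trans (by gcongr)

lemma pr_exists_card_le (h : Admissible μ K P α) {β : Type*} [Fintype β] (s : Finset ℕ)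
    (E : Finset β → Config n r P → Prop) {g : ℕ → ℝ}
    (hE : ∀ S : Finset β, S.card ∈ s → pr μ K α (E S) ≤ g S.card) :
    pr μ K α (fun c => ∃ S : Finset β, S.card ∈ s ∧ E S c)
      ≤ ∑ l ∈ s, (Fintype.card β).choose l * g l := by
  calc pr μ K α (fun c => ∃ S : Finset β, S.card ∈ s ∧ E S c)
      ≤ pr μ K α (fun c => ∃ l ∈ s, ∃ S ∈ Finset.powersetCard l Finset.univ, E S c) :=
        pr_mono h fun c _ ⟨S, hS, hES⟩ =>
          ⟨S.card, hS, S, Finset.mem_powersetCard_univ.mpr rfl, hES⟩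
    _ ≤ ∑ l ∈ s, ∑ S ∈ Finset.powersetCard l Finset.univ, pr μ K α (E S) :=
        (pr_exists_le h s _).trans (Finset.sum_le_sum fun l _ => pr_exists_le h _ E)
    _ ≤ ∑ l ∈ s, ∑ _S ∈ Finset.powersetCard l (Finset.univ : Finset β), g l :=
        Finset.sum_le_sum fun l hl => Finset.sum_le_sum fun S hS => by
          obtain rfl := Finset.mem_powersetCard_univ.mp hS
          exact hE S hl
    _ = ∑ l ∈ s, (Fintype.card β).choose l * g l := by
        simp only [Finset.sum_const, Finset.card_powersetCard, Finset.card_univ, nsmul_eq_mul]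

end Model

/-- No edge of `G` joins `S` to its complement. -/
def NoEdgeLeaving {V : Type*} (G : SimpleGraph V) (S : Finset V) : Prop :=
  ∀ x ∈ S, ∀ v ∉ S, ¬ G.Adj x v

/-- Every nonempty subfamily of the sets `R i` has a union with at least `k` elements and with more
than `θ` (number of sets) elements. -/
def SpreadOut {ι β : Type*} [DecidableEq β] (θ : ℕ → ℝ) (k : ℕ) (R : ι → Finset β) : Prop :=
  ∀ T : Finset ι, T.Nonempty → k ≤ (T.biUnion R).card ∧ θ T.card < (T.biUnion R).card

/-- The number of keys that `l` rings of size at least `k` should jointly exceed: either a fraction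
`1 - ε` of the largest value `l * k`, or a fixed fraction of the pool. The latter fraction
`exp (-(8 / ε))` is so small that a first moment bound over sets of keys succeeds. -/
noncomputable def keyThreshold (ε : ℝ) (k P l : ℕ) : ℝ :=
  min ((1 - ε) * (l * k)) (Real.exp (-(8 / ε)) * P)

/-- The bound, for a set of `l` vertices with spread-out rings, on the probability that a further
vertex has no neighbour in the set. -/
noncomputable def missBound {r : ℕ} (μ : Fin (r + 1) → ℝ) (K : Fin (r + 1) → ℕ) (P : ℕ)
    (α ε : ℝ) (l : ℕ) : ℝ :=
  ∑ j, μ j * (ε + (1 - ε) * Real.exp (-((1 - ε) * (l * (α * pEdge P (K 0) (K j))))))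

/-- The first moment bound on the probability that `l` rings of size at least `k` jointly hold at
most `m` keys: a union bound over the sets of `m` keys that contain all of them. -/
noncomputable def unionBound (P k m l : ℕ) : ℝ :=
  P.choose m * (((m : ℝ) / P) ^ k) ^ l

/-- The bound on the probability that the rings are not spread out. -/
noncomputable def sparseBound (n P k : ℕ) (ε : ℝ) : ℝ :=
  ∑ l ∈ Finset.Icc 1 n, n.choose l * unionBound P k ⌊keyThreshold ε k P l⌋₊ l

/-- The bound on the probability that the rings are spread out and the graph is disconnected. -/
noncomputable def cutBound {r : ℕ} (μ : Fin (r + 1) → ℝ) (K : Fin (r + 1) → ℕ) (P : ℕ) (α : ℝ)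
    (n : ℕ) (ε : ℝ) : ℝ :=
  ∑ l ∈ Finset.Icc 1 (n / 2), n.choose l * missBound μ K P α ε l ^ (n - l)

section GraphCuts

variable {V : Type*} {G : SimpleGraph V}

lemma NoEdgeLeaving.compl [Fintype V] [DecidableEq V] {S : Finset V} (h : NoEdgeLeaving G S) :
    NoEdgeLeaving G Sᶜ := by
  intro x hx v hv hxv
  rw [Finset.mem_compl] at hx hv
  exact h v (not_not.mp hv) x hx hxv.symm

lemma exists_noEdgeLeaving_of_not_connected [Fintype V] [Nonempty V] (h : ¬ G.Connected) :
    ∃ S : Finset V, S.card ∈ Finset.Icc 1 (Fintype.card V / 2) ∧ NoEdgeLeaving G S := by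
  classical
  obtain ⟨x, y, hxy⟩ : ∃ x y, ¬ G.Reachable x y := by
    by_contra! hreach
    exact h ⟨hreach⟩
  set S : Finset V := {z | G.Reachable x z} with hS
  have hx : x ∈ S := by simp [hS]
  have hy : y ∈ Sᶜ := by simpa [hS] using hxy
  have hcut : NoEdgeLeaving G S := by
    intro u hu v hv huv
    simp only [hS, Finset.mem_filter_univ] at hu hv
    exact hv (hu.trans huv.reachable)
  have hcard := S.card_add_card_compl
  have hS1 : 0 < S.card := Finset.card_pos.mpr ⟨x, hx⟩
  have hSc1 : 0 < Sᶜ.card := Finset.card_pos.mpr ⟨y, hy⟩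
  rcases le_total S.card Sᶜ.card with hle | hle
  · exact ⟨S, Finset.mem_Icc.mpr (by omega), hcut⟩
  · exact ⟨Sᶜ, Finset.mem_Icc.mpr (by omega), hcut.compl⟩

lemma SpreadOut.comp_embedding {ι κ β : Type*} [DecidableEq β] {θ : ℕ → ℝ} {k : ℕ}
    {R : ι → Finset β} (h : SpreadOut θ k R) (e : κ ↪ ι) : SpreadOut θ k (R ∘ e) := by
  intro T hT
  have hunion : T.biUnion (R ∘ e) = (T.map e).biUnion R := by
    ext; simp
  rw [hunion, ← T.card_map e]
  exact h (T.map e) (hT.map)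

end GraphCuts

section Averaging

lemma prod_ite_disjoint_eq_sum {ι β : Type*} [Fintype ι] [DecidableEq β] (α : ℝ)
    (R : ι → Finset β) (Q : Finset β) :
    ∏ x, (if Disjoint (R x) Q then 1 else 1 - α)
      = ∑ T : Finset ι, if Disjoint (T.biUnion R) Q then
          α ^ T.card * (1 - α) ^ (Fintype.card ι - T.card) else 0 := by
  classical
  have hfactor (x : ι) : (if Disjoint (R x) Q then 1 else 1 - α)
      = (if Disjoint (R x) Q then α else 0) + (1 - α) := by
    split_ifs <;> ring
  simp only [hfactor, Fintype.prod_add, Finset.prod_ite_zero, Finset.prod_const, Finset.card_compl,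
    ite_mul, zero_mul, Finset.disjoint_biUnion_left]

lemma sum_binomial_mul_add_mul_pow (ι : Type*) [Fintype ι] (α a b y : ℝ) :
    ∑ T : Finset ι, α ^ T.card * (1 - α) ^ (Fintype.card ι - T.card) * (a + b * y ^ T.card)
      = a + b * (1 - α * (1 - y)) ^ Fintype.card ι := by
  have htotal := Fintype.sum_pow_mul_eq_add_pow ι α (1 - α)
  have hweighted := Fintype.sum_pow_mul_eq_add_pow ι (α * y) (1 - α)
  rw [add_sub_cancel, one_pow] at htotal
  calc ∑ T : Finset ι, α ^ T.card * (1 - α) ^ (Fintype.card ι - T.card) * (a + b * y ^ T.card)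
      = a * ∑ T : Finset ι, α ^ T.card * (1 - α) ^ (Fintype.card ι - T.card)
        + b * ∑ T : Finset ι, (α * y) ^ T.card * (1 - α) ^ (Fintype.card ι - T.card) := by
        rw [Finset.mul_sum, Finset.mul_sum, ← Finset.sum_add_distrib]
        exact Finset.sum_congr rfl fun T _ => by ring
    _ = a + b * (1 - α * (1 - y)) ^ Fintype.card ι := by
        rw [htotal, hweighted]
        ring

lemma one_sub_mul_pow_le_exp {α s p : ℝ} (hα : α ≤ 1) (hs0 : 0 ≤ s) (hs1 : s ≤ 1) (hp0 : 0 ≤ p)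
    (hp1 : p ≤ 1) (l : ℕ) : (1 - α * (s * p)) ^ l ≤ Real.exp (-(s * (l * (α * p)))) := by
  have hsp : s * p ≤ 1 := mul_le_one₀ hs1 hp0 hp1
  have hbase : 0 ≤ 1 - α * (s * p) := by nlinarith [mul_nonneg hs0 hp0]
  calc (1 - α * (s * p)) ^ l ≤ Real.exp (-(α * (s * p))) ^ l :=
        pow_le_pow_left₀ hbase (Real.one_sub_le_exp_neg _) l
    _ = Real.exp (-(s * (l * (α * p)))) := by rw [← Real.exp_nat_mul]; ring_nf

/-- In the first case of the minimum in `keyThreshold` the avoided set is almost as large as `l`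
disjoint rings; in the second case a ring misses it with probability at most `ε`. -/
lemma avoidProb_le_of_keyThreshold_lt {P k k₀ u l : ℕ} {ε : ℝ} (hε1 : ε < 1)
    (hexp : Real.exp (-(Real.exp (-(8 / ε)) * k₀)) ≤ ε) (hk : k₀ ≤ k) (hkP : k ≤ P) (hku : k₀ ≤ u)
    (huP : u ≤ P) (hu : keyThreshold ε k₀ P l < u) :
    avoidProb P u k ≤ ε + (1 - ε) * (1 - (1 - ε) * pEdge P k₀ k) ^ l := by
  have hε0 : 0 < ε := (Real.exp_pos _).trans_le hexp
  have hk₀ : 0 < k₀ := by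
    rw [Nat.pos_iff_ne_zero]
    rintro rfl
    simp only [Nat.cast_zero, mul_zero, neg_zero, Real.exp_zero] at hexp
    exact hε1.not_ge hexp
  have hy : 0 ≤ 1 - (1 - ε) * pEdge P k₀ k :=
    sub_nonneg.mpr (mul_le_one₀ (by linarith) (pEdge_nonneg ..) (pEdge_le_one ..))
  have hy1 : 1 - (1 - ε) * pEdge P k₀ k ≤ 1 :=
    sub_le_self 1 (mul_nonneg (by linarith) (pEdge_nonneg ..))
  rcases min_lt_iff.mp hu with hlt | hlt
  · have hmiss : avoidProb P u k ≤ (1 - (1 - ε) * pEdge P k₀ k) ^ l :=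
      avoidProb_le_pow (by linarith) (by linarith) hk₀ hku huP hkP (by linarith)
    nlinarith [pow_le_one₀ (n := l) hy hy1]
  · have hmiss : avoidProb P u k ≤ ε := by
      refine (avoidProb_le_exp huP hlt.le (by omega)).trans (le_trans ?_ hexp)
      gcongr
    linarith [mul_nonneg (sub_nonneg.mpr hε1.le) (pow_nonneg hy l)]

variable {r P : ℕ} {μ : Fin (r + 1) → ℝ} {K : Fin (r + 1) → ℕ} {α ε : ℝ}

lemma sum_vertexWeight_mul_prod_disjoint {ι : Type*} [Fintype ι] (μ : Fin (r + 1) → ℝ)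
    (K : Fin (r + 1) → ℕ) (α : ℝ) (R : ι → Finset (Fin P)) :
    ∑ a, vertexWeight μ K a * ∏ x, (if Disjoint (R x) a.2 then 1 else 1 - α)
      = ∑ T : Finset ι, α ^ T.card * (1 - α) ^ (Fintype.card ι - T.card) *
          ∑ j, μ j * avoidProb P (T.biUnion R).card (K j) := by
  classical
  simp only [prod_ite_disjoint_eq_sum, ← sum_vertexWeight_disjoint, Finset.mul_sum]
  rw [Finset.sum_comm]
  refine Finset.sum_congr rfl fun T _ => Finset.sum_congr rfl fun a _ => ?_
  split_ifs <;> ring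

lemma sum_vertexWeight_mul_prod_disjoint_le {ι : Type*} [Fintype ι] (h : Admissible μ K P α)
    (hε1 : ε < 1) (hexp : Real.exp (-(Real.exp (-(8 / ε)) * K 0)) ≤ ε) {R : ι → Finset (Fin P)}
    (hR : SpreadOut (keyThreshold ε (K 0) P) (K 0) R) :
    ∑ a, vertexWeight μ K a * ∏ x, (if Disjoint (R x) a.2 then 1 else 1 - α)
      ≤ missBound μ K P α ε (Fintype.card ι) := by
  obtain ⟨hα0, hα1⟩ := h.channel_mem
  have hε0 : 0 < ε := (Real.exp_pos _).trans_le hexp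
  have havoid (T : Finset ι) (j : Fin (r + 1)) : avoidProb P (T.biUnion R).card (K j)
      ≤ ε + (1 - ε) * (1 - (1 - ε) * pEdge P (K 0) (K j)) ^ T.card := by
    rcases T.eq_empty_or_nonempty with rfl | hT
    · simp [avoidProb_zero (h.ringSize_le j)]
    · exact avoidProb_le_of_keyThreshold_lt hε1 hexp (h.ringSize_zero_le j) (h.ringSize_le j)
        (hR T hT).1 (card_finset_fin_le _) (hR T hT).2
  rw [sum_vertexWeight_mul_prod_disjoint]
  calc ∑ T : Finset ι, α ^ T.card * (1 - α) ^ (Fintype.card ι - T.card) *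
        ∑ j, μ j * avoidProb P (T.biUnion R).card (K j)
      ≤ ∑ T : Finset ι, α ^ T.card * (1 - α) ^ (Fintype.card ι - T.card) *
        ∑ j, μ j * (ε + (1 - ε) * (1 - (1 - ε) * pEdge P (K 0) (K j)) ^ T.card) := by
        refine Finset.sum_le_sum fun T _ => mul_le_mul_of_nonneg_left ?_ ?_
        · exact Finset.sum_le_sum fun j _ =>
            mul_le_mul_of_nonneg_left (havoid T j) (h.weight_nonneg j)
        · exact mul_nonneg (pow_nonneg hα0 _) (pow_nonneg (by linarith) _)
    _ = ∑ j, μ j * (ε + (1 - ε) *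
          (1 - α * ((1 - ε) * pEdge P (K 0) (K j))) ^ Fintype.card ι) := by
        simp only [Finset.mul_sum, mul_left_comm _ (μ _)]
        rw [Finset.sum_comm]
        simp only [← Finset.mul_sum, sum_binomial_mul_add_mul_pow, sub_sub_cancel]
    _ ≤ missBound μ K P α ε (Fintype.card ι) := by
        refine Finset.sum_le_sum fun j _ => mul_le_mul_of_nonneg_left ?_ (h.weight_nonneg j)
        gcongr
        exact one_sub_mul_pow_le_exp hα1 (by linarith) (by linarith) (pEdge_nonneg ..)
          (pEdge_le_one ..) _

end Averaging

section Cuts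

variable {n r P : ℕ} {μ : Fin (r + 1) → ℝ} {K : Fin (r + 1) → ℕ} {α ε : ℝ}

lemma graphOf_adj {c : Config n r P} {x v : Fin n} : (graphOf c).Adj x v ↔ Adj c x v := by
  rw [graphOf, SimpleGraph.fromRel_adj, Finset.inter_comm (c.2.1 v), Sym2.eq_swap (a := v), or_self,
    Adj]

open Classical in
lemma sum_channelWeight_noEdgeLeaving (α : ℝ) (S : Finset (Fin n))
    (f : Fin n → Fin (r + 1) × Finset (Fin P)) :
    ∑ B, (if NoEdgeLeaving (graphOf (assemble f B)) S then ∏ e, channelWeight α e (B e) else 0)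
      = ∏ v : {v // v ∉ S}, ∏ x : {x // x ∈ S},
          if Disjoint (f x).2 (f v).2 then 1 else 1 - α := by
  let channel (q : {v // v ∉ S} × {x // x ∈ S}) : Sym2 (Fin n) := s(q.2, q.1)
  have hchannel : Function.Injective channel := by
    rintro ⟨v, x⟩ ⟨v', x'⟩ h
    rcases Sym2.eq_iff.mp h with ⟨hx, hv⟩ | ⟨hx, -⟩
    · exact Prod.ext (Subtype.ext hv) (Subtype.ext hx)
    · exact absurd (hx ▸ x.2) v'.2
  have hoff (q : {v // v ∉ S} × {x // x ∈ S}) :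
      ∑ b, (if b = false then channelWeight α (channel q) b else 0) = 1 - α := by
    have hdiag : ¬ (channel q).IsDiag := fun h => q.1.2 (Sym2.mk_isDiag_iff.mp h ▸ q.2.2)
    simp [channelWeight, hdiag]
  have hevent (B : Sym2 (Fin n) → Bool) : NoEdgeLeaving (graphOf (assemble f B)) S ↔
      ∀ e ∈ ({q | ¬ Disjoint (f q.2).2 (f q.1).2} : Finset _).image channel, B e = false := by
    simp only [NoEdgeLeaving, graphOf_adj, Adj, Finset.forall_mem_image, Finset.mem_filter_univ,
      Prod.forall, Subtype.forall, Finset.not_disjoint_iff_nonempty_inter, assemble, channel,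
      not_and, Bool.not_eq_true]
    exact ⟨fun h v hv x hx => h x hx v hv fun hxv => hv (hxv ▸ hx),
      fun h x hx v hv _ => h v hv x hx⟩
  rw [sum_prod_eq_prod_sum_of_forall_mem (channelWeight α) _ (fun _ b => b = false)
    (fun e _ => sum_channelWeight α e) hevent, Finset.prod_image fun _ _ _ _ h => hchannel h,
    ← Fintype.prod_prod_type' fun (v : {v // v ∉ S}) (x : {x // x ∈ S}) =>
      if Disjoint (f x).2 (f v).2 then 1 else 1 - α]
  simp only [hoff, Finset.prod_filter, ite_not]

lemma missBound_nonneg (h : Admissible μ K P α) (hε0 : 0 ≤ ε) (hε1 : ε ≤ 1) (l : ℕ) :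
    0 ≤ missBound μ K P α ε l := by
  have := sub_nonneg.mpr hε1
  exact Finset.sum_nonneg fun j _ => mul_nonneg (h.weight_nonneg j) (by positivity)

open Classical in
/-- Given the rings inside `S`, the vertices outside `S` avoid `S` independently of each other. -/
lemma pr_rings_and_noEdgeLeaving (S : Finset (Fin n))
    (E : ({x // x ∈ S} → Finset (Fin P)) → Prop) :
    pr μ K α (fun c : Config n r P => E (fun x => c.2.1 x) ∧ NoEdgeLeaving (graphOf c) S)
      = ∑ g : {x // x ∈ S} → Fin (r + 1) × Finset (Fin P), (∏ x, vertexWeight μ K (g x)) *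
          if E fun x => (g x).2 then
            (∑ a, vertexWeight μ K a * ∏ x, if Disjoint (g x).2 a.2 then 1 else 1 - α)
              ^ (n - S.card)
          else 0 := by
  have hcard : Fintype.card {v // v ∉ S} = n - S.card := by
    rw [Fintype.card_subtype_compl, Fintype.card_fin, Fintype.card_coe]
  have hchannels : pr μ K α (fun c : Config n r P =>
        E (fun x => c.2.1 x) ∧ NoEdgeLeaving (graphOf c) S)
      = ∑ f : Fin n → Fin (r + 1) × Finset (Fin P), (∏ x, vertexWeight μ K (f x)) *
          ((if E fun x => (f x).2 then 1 else 0) * ∏ v : {v // v ∉ S}, ∏ x : {x // x ∈ S},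
            if Disjoint (f x).2 (f v).2 then 1 else 1 - α) := by
    rw [pr_eq_sum_assemble]
    refine Finset.sum_congr rfl fun f _ => congrArg ((∏ x, vertexWeight μ K (f x)) * ·) ?_
    rw [← sum_channelWeight_noEdgeLeaving, Finset.mul_sum]
    refine Finset.sum_congr rfl fun B _ => ?_
    by_cases hE : E fun x => (f x).2
    · simp only [assemble, hE, true_and, if_true, one_mul]
      congr!
    · simp only [assemble, hE, false_and, if_false, zero_mul]
  rw [hchannels]
  rw [sum_pi_eq_sum_subtype_pi (· ∈ S) (fun _ => vertexWeight μ K)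
    (fun g => if E (fun x => (g x).2) then 1 else 0)
    fun _ g a => ∏ x, if Disjoint (g x).2 a.2 then 1 else 1 - α]
  simp only [Finset.prod_const, Finset.card_univ, hcard, ite_mul, one_mul, zero_mul]
  congr!

lemma pr_spreadOut_and_noEdgeLeaving_le (h : Admissible μ K P α) (hε1 : ε < 1)
    (hexp : Real.exp (-(Real.exp (-(8 / ε)) * K 0)) ≤ ε) (S : Finset (Fin n)) :
    pr μ K α (fun c : Config n r P =>
        SpreadOut (keyThreshold ε (K 0) P) (K 0) (fun x : {x // x ∈ S} => c.2.1 x) ∧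
          NoEdgeLeaving (graphOf c) S)
      ≤ missBound μ K P α ε S.card ^ (n - S.card) := by
  classical
  have hε0 : 0 < ε := (Real.exp_pos _).trans_le hexp
  rw [pr_rings_and_noEdgeLeaving S (SpreadOut (keyThreshold ε (K 0) P) (K 0))]
  calc _ ≤ ∑ g : {x // x ∈ S} → Fin (r + 1) × Finset (Fin P),
        (∏ x, vertexWeight μ K (g x)) * missBound μ K P α ε S.card ^ (n - S.card) := by
        refine Finset.sum_le_sum fun g _ => mul_le_mul_of_nonneg_left ?_
          (Finset.prod_nonneg fun _ _ => vertexWeight_nonneg h.weight_nonneg _)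
        split_ifs with hg
        · have hle := sum_vertexWeight_mul_prod_disjoint_le h hε1 hexp hg
          rw [Fintype.card_coe] at hle
          refine pow_le_pow_left₀ (Finset.sum_nonneg fun a _ => ?_) hle _
          refine mul_nonneg (vertexWeight_nonneg h.weight_nonneg a)
            (Finset.prod_nonneg fun x _ => ?_)
          split_ifs <;> linarith [h.channel_mem.2]
        · exact pow_nonneg (missBound_nonneg h hε0.le hε1.le _) _
    _ = missBound μ K P α ε S.card ^ (n - S.card) := by
        rw [← Finset.sum_mul, ← Fintype.prod_sum fun (_ : {x // x ∈ S}) a => vertexWeight μ K a]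
        simp only [sum_vertexWeight h, Finset.prod_const_one, one_mul]

lemma pr_rings_subset_le (h : Admissible μ K P α) (T : Finset (Fin n)) (X : Finset (Fin P)) :
    pr μ K α (fun c : Config n r P => ∀ x ∈ T, c.2.1 x ⊆ X)
      ≤ (((X.card : ℝ) / P) ^ K 0) ^ T.card := by
  classical
  have hXP : X.card ≤ P := card_finset_fin_le X
  have hfrac : (X.card / P : ℝ) ≤ 1 := div_le_one_of_le₀ (by exact_mod_cast hXP) P.cast_nonneg
  have hring : ∑ a : Fin (r + 1) × Finset (Fin P), (if a.2 ⊆ X then vertexWeight μ K a else 0)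
      ≤ (X.card / P : ℝ) ^ K 0 := by
    calc _ = ∑ j, μ j * (X.card.choose (K j) / P.choose (K j) : ℝ) :=
          sum_vertexWeight_subset μ K X
      _ ≤ ∑ j, μ j * (X.card / P : ℝ) ^ K 0 := by
          refine Finset.sum_le_sum fun j _ => mul_le_mul_of_nonneg_left ?_ (h.weight_nonneg j)
          exact (choose_div_choose_le_pow hXP _).trans
            (pow_le_pow_of_le_one (by positivity) hfrac (h.ringSize_zero_le j))
      _ = (X.card / P : ℝ) ^ K 0 := by rw [← Finset.sum_mul, h.sum_weight, one_mul]
  have hproduct : pr μ K α (fun c : Config n r P => ∀ x ∈ T, c.2.1 x ⊆ X)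
      = ∏ _x ∈ T, ∑ a : Fin (r + 1) × Finset (Fin P),
          if a.2 ⊆ X then vertexWeight μ K a else 0 := by
    rw [pr_eq_sum_assemble, ← sum_prod_eq_prod_sum_of_forall_mem
      (fun _ : Fin n => vertexWeight μ K) T (fun _ a => a.2 ⊆ X) (fun _ _ => sum_vertexWeight h)
      fun f => Iff.rfl]
    refine Finset.sum_congr rfl fun f _ => ?_
    by_cases hf : ∀ x ∈ T, (f x).2 ⊆ X
    · simp only [assemble, eq_true hf, if_true, sum_prod_channelWeight, mul_one]
    · simp only [assemble, eq_false hf, if_false, Finset.sum_const_zero, mul_zero]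
  rw [hproduct, Finset.prod_const]
  refine pow_le_pow_left₀ (Finset.sum_nonneg fun a _ => ?_) hring _
  split_ifs
  exacts [vertexWeight_nonneg h.weight_nonneg a, le_rfl]

lemma pr_card_biUnion_le (h : Admissible μ K P α) (T : Finset (Fin n)) {m : ℕ} (hm : m ≤ P) :
    pr μ K α (fun c : Config n r P => (T.biUnion c.2.1).card ≤ m)
      ≤ unionBound P (K 0) m T.card := by
  calc pr μ K α (fun c : Config n r P => (T.biUnion c.2.1).card ≤ m)
      ≤ pr μ K α (fun c : Config n r P =>
          ∃ X : Finset (Fin P), X.card ∈ ({m} : Finset ℕ) ∧ ∀ x ∈ T, c.2.1 x ⊆ X) := by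
        refine pr_mono h fun c _ hc => ?_
        obtain ⟨X, hTX, hX⟩ := Finset.exists_superset_card_eq hc (by rwa [Fintype.card_fin])
        exact ⟨X, Finset.mem_singleton.mpr hX, Finset.biUnion_subset.mp hTX⟩
    _ ≤ ∑ l ∈ {m}, (Fintype.card (Fin P)).choose l * (((l : ℝ) / P) ^ K 0) ^ T.card :=
        pr_exists_card_le h _ _ fun X _ => pr_rings_subset_le h T X
    _ = unionBound P (K 0) m T.card := by
        rw [Finset.sum_singleton, Fintype.card_fin, unionBound]

lemma pr_not_spreadOut_le (h : Admissible μ K P α) (hε : 0 ≤ ε) :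
    pr μ K α (fun c : Config n r P => ¬ SpreadOut (keyThreshold ε (K 0) P) (K 0) c.2.1)
      ≤ sparseBound n P (K 0) ε := by
  have hfraction : Real.exp (-(8 / ε)) ≤ 1 :=
    Real.exp_le_one_iff.mpr (neg_nonpos.mpr (by positivity))
  have hfloor (l : ℕ) : ⌊keyThreshold ε (K 0) P l⌋₊ ≤ P :=
    Nat.floor_le_of_le ((min_le_right _ _).trans (mul_le_of_le_one_left P.cast_nonneg hfraction))
  calc pr μ K α (fun c : Config n r P => ¬ SpreadOut (keyThreshold ε (K 0) P) (K 0) c.2.1)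
      ≤ pr μ K α (fun c : Config n r P => ∃ T : Finset (Fin n), T.card ∈ Finset.Icc 1 n ∧
          (T.biUnion c.2.1).card ≤ ⌊keyThreshold ε (K 0) P T.card⌋₊) := by
        refine pr_mono h fun c hc hspread => ?_
        simp only [SpreadOut, not_forall] at hspread
        obtain ⟨T, ⟨x, hx⟩, hsmall⟩ := hspread
        have hring : K 0 ≤ (T.biUnion c.2.1).card := by
          calc K 0 ≤ K (c.1 x) := h.ringSize_zero_le _
            _ = (c.2.1 x).card := (card_ring_of_wt_ne_zero hc x).symm
            _ ≤ (T.biUnion c.2.1).card := Finset.card_le_card (Finset.subset_biUnion_of_mem _ hx)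
        refine ⟨T, Finset.mem_Icc.mpr ⟨Finset.card_pos.mpr ⟨x, hx⟩, card_finset_fin_le T⟩, ?_⟩
        exact Nat.le_floor (not_lt.mp fun hlt => hsmall ⟨hring, hlt⟩)
    _ ≤ sparseBound n P (K 0) ε := by
        have hsum := pr_exists_card_le h (Finset.Icc 1 n)
          (fun T (c : Config n r P) => (T.biUnion c.2.1).card ≤ ⌊keyThreshold ε (K 0) P T.card⌋₊)
          (g := fun l => unionBound P (K 0) ⌊keyThreshold ε (K 0) P l⌋₊ l)
          fun T _ => pr_card_biUnion_le h T (hfloor T.card)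
        rwa [Fintype.card_fin] at hsum

lemma pr_spreadOut_and_exists_noEdgeLeaving_le (h : Admissible μ K P α) (hε1 : ε < 1)
    (hexp : Real.exp (-(Real.exp (-(8 / ε)) * K 0)) ≤ ε) :
    pr μ K α (fun c : Config n r P => ∃ S : Finset (Fin n), S.card ∈ Finset.Icc 1 (n / 2) ∧
        SpreadOut (keyThreshold ε (K 0) P) (K 0) c.2.1 ∧ NoEdgeLeaving (graphOf c) S)
      ≤ cutBound μ K P α n ε := by
  have hsum := pr_exists_card_le h (Finset.Icc 1 (n / 2))
    (fun S (c : Config n r P) =>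
      SpreadOut (keyThreshold ε (K 0) P) (K 0) c.2.1 ∧ NoEdgeLeaving (graphOf c) S)
    (g := fun l => missBound μ K P α ε l ^ (n - l)) fun S _ =>
      (pr_mono h fun c _ ⟨hspread, hcut⟩ =>
        ⟨hspread.comp_embedding (Function.Embedding.subtype _), hcut⟩).trans
        (pr_spreadOut_and_noEdgeLeaving_le h hε1 hexp S)
  rwa [Fintype.card_fin] at hsum

lemma pr_not_connected_le (h : Admissible μ K P α) (hn : 0 < n) (hε1 : ε < 1)
    (hexp : Real.exp (-(Real.exp (-(8 / ε)) * K 0)) ≤ ε) :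
    pr μ K α (fun c : Config n r P => ¬ (graphOf c).Connected)
      ≤ sparseBound n P (K 0) ε + cutBound μ K P α n ε := by
  have : Nonempty (Fin n) := Fin.pos_iff_nonempty.mp hn
  have hε0 : 0 < ε := (Real.exp_pos _).trans_le hexp
  refine (pr_mono h fun c _ hc => ?_).trans ((pr_or_le h _ _).trans (add_le_add
    (pr_not_spreadOut_le h hε0.le) (pr_spreadOut_and_exists_noEdgeLeaving_le h hε1 hexp)))
  obtain ⟨S, hS, hcut⟩ := exists_noEdgeLeaving_of_not_connected hc
  rw [Fintype.card_fin] at hS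
  exact or_iff_not_imp_left.mpr fun hspread => ⟨S, hS, not_not.mp hspread, hcut⟩

end Cuts

section SparseTerms

lemma choose_mul_pow_le_exp_one_mul_pow {N m : ℕ} {x y : ℝ} (hx : 0 ≤ x) (hy : 0 ≤ y)
    (h : N * x ≤ m * y) : N.choose m * x ^ m ≤ (Real.exp 1 * y) ^ m := by
  calc N.choose m * x ^ m ≤ (N : ℝ) ^ m / m.factorial * x ^ m := by
        gcongr
        exact Nat.choose_le_pow_div m N
    _ = (N * x) ^ m / m.factorial := by rw [mul_pow]; ring
    _ ≤ (m * y) ^ m / m.factorial := by gcongr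
    _ = (m : ℝ) ^ m / m.factorial * y ^ m := by rw [mul_pow]; ring
    _ ≤ Real.exp m * y ^ m := by
        gcongr
        exact Real.pow_div_factorial_le_exp _ m.cast_nonneg m
    _ = (Real.exp 1 * y) ^ m := by rw [mul_pow, Real.exp_one_pow]

lemma choose_mul_div_pow_self_le_exp (N m : ℕ) :
    N.choose m * ((m : ℝ) / N) ^ m ≤ Real.exp m := by
  have hmean : N * ((m : ℝ) / N) ≤ m * 1 := by
    rw [mul_one, mul_div_left_comm]
    exact mul_le_of_le_one_right m.cast_nonneg (div_self_le_one _)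
  calc N.choose m * ((m : ℝ) / N) ^ m ≤ (Real.exp 1 * 1) ^ m :=
        choose_mul_pow_le_exp_one_mul_pow (by positivity) zero_le_one hmean
    _ = Real.exp m := by rw [mul_one, Real.exp_one_pow]

lemma choose_mul_div_pow_le {n l m P k : ℕ} {σ : ℝ} (hσ : 0 < σ) (hP : 0 < P) (hσP : σ * n ≤ P)
    (hm : (m : ℝ) ≤ k * l) :
    n.choose l * (m / P : ℝ) ^ l ≤ (Real.exp 1 * (Real.exp k / σ)) ^ l := by
  have : (0 : ℝ) < P := by exact_mod_cast hP
  refine choose_mul_pow_le_exp_one_mul_pow (by positivity) (by positivity) ?_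
  calc n * (m / P : ℝ) = σ * n * m / (σ * P) := by field_simp
    _ ≤ P * (k * l) / (σ * P) := by gcongr
    _ = l * (k / σ) := by field_simp
    _ ≤ l * (Real.exp k / σ) := by
        gcongr
        linarith [Real.add_one_le_exp (k : ℝ)]

lemma pow_le_exp_neg_pow {l k d : ℕ} {x ε : ℝ} (hε : 0 < ε) (hx0 : 0 ≤ x)
    (hx : x ≤ Real.exp (-(8 / ε))) (hd : ε * (l * k) / 2 ≤ d) :
    x ^ d ≤ Real.exp (-(4 * k)) ^ l := by
  calc x ^ d ≤ Real.exp (-(8 / ε)) ^ d := by gcongr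
    _ = Real.exp (-(8 / ε * d)) := by rw [← Real.exp_nat_mul]; ring_nf
    _ ≤ Real.exp (-(8 / ε * (ε * (l * k) / 2))) := by gcongr
    _ = Real.exp (-(4 * k)) ^ l := by
        rw [← Real.exp_nat_mul]
        congr 1
        field_simp
        ring

/-- With `x = m / P`, the factor `x ^ (k * l)` is split as `x ^ m * x ^ l * x ^ d`. The first two
parts absorb the binomial coefficients, and `d` is so large that the third wins. -/
lemma choose_mul_unionBound_le {n l m P k : ℕ} {ε σ : ℝ} (hε : 0 < ε) (hσ : 0 < σ) (hP : 0 < P)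
    (hσP : σ * n ≤ P) (hεk : 2 ≤ ε * k) (hm : m ≤ (1 - ε) * (l * k))
    (hmP : m ≤ Real.exp (-(8 / ε)) * P) :
    n.choose l * unionBound P k m l ≤ (Real.exp 1 / σ * Real.exp (-(2 * k))) ^ l := by
  have hslack : (m : ℝ) + l + ε * (l * k) / 2 ≤ l * k := by nlinarith [l.cast_nonneg (α := ℝ)]
  have hεlk : 0 ≤ ε * (l * k) := by positivity
  have hmk : (m : ℝ) ≤ k * l := by linarith [l.cast_nonneg (α := ℝ)]
  obtain ⟨d, hd⟩ : ∃ d, k * l = m + l + d := by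
    refine Nat.exists_eq_add_of_le ?_
    rify
    linarith
  have hd' : ε * (l * k) / 2 ≤ d := by
    have : (k * l : ℝ) = m + l + d := by exact_mod_cast hd
    linarith
  set x : ℝ := m / P
  have hx0 : 0 ≤ x := by positivity
  have hkeys : P.choose m * x ^ m ≤ Real.exp k ^ l := by
    refine (choose_mul_div_pow_self_le_exp P m).trans ?_
    rw [← Real.exp_nat_mul]
    exact Real.exp_le_exp.mpr (by linarith)
  have hvertices := choose_mul_div_pow_le hσ hP hσP hmk
  have hrest := pow_le_exp_neg_pow hε hx0
    (div_le_of_le_mul₀ P.cast_nonneg (Real.exp_pos _).le hmP) hd'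
  calc n.choose l * unionBound P k m l
      = P.choose m * x ^ m * (n.choose l * x ^ l) * x ^ d := by
        rw [unionBound, ← pow_mul, hd, pow_add, pow_add]
        ring
    _ ≤ Real.exp k ^ l * (Real.exp 1 * (Real.exp k / σ)) ^ l * Real.exp (-(4 * k)) ^ l := by
        gcongr
    _ = (Real.exp 1 / σ * Real.exp (-(2 * k))) ^ l := by
        have hexp : Real.exp (-(2 * k)) = Real.exp k * Real.exp k * Real.exp (-(4 * k)) := by
          rw [← Real.exp_add, ← Real.exp_add]
          ring_nf
        rw [hexp, ← mul_pow, ← mul_pow]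
        ring

lemma sparseBound_le {n P k : ℕ} {ε σ : ℝ} (hε0 : 0 < ε) (hε1 : ε ≤ 1) (hσ : 0 < σ) (hP : 0 < P)
    (hσP : σ * n ≤ P) (hεk : 2 ≤ ε * k) :
    sparseBound n P k ε ≤ ∑ l ∈ Finset.Icc 1 n, (Real.exp 1 / σ * Real.exp (-(2 * k))) ^ l := by
  refine Finset.sum_le_sum fun l _ => ?_
  have := sub_nonneg.mpr hε1
  have hfloor : (⌊keyThreshold ε k P l⌋₊ : ℝ) ≤ keyThreshold ε k P l :=
    Nat.floor_le (le_min (by positivity) (by positivity))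
  exact choose_mul_unionBound_le hε0 hσ hP hσP hεk (hfloor.trans (min_le_left _ _))
    (hfloor.trans (min_le_right _ _))

end SparseTerms

section CutTerms

variable {r P : ℕ} {μ : Fin (r + 1) → ℝ} {K : Fin (r + 1) → ℕ} {α ε : ℝ}

lemma missBound_le_exp_neg (h : Admissible μ K P α) {l : ℕ} {x : ℝ}
    (hx : x ≤ (1 - ε) *
      ∑ j, μ j * (1 - Real.exp (-((1 - ε) * (l * (α * pEdge P (K 0) (K j))))))) :
    missBound μ K P α ε l ≤ Real.exp (-x) := by
  have hsum : missBound μ K P α ε l = ∑ j, μ j - (1 - ε) *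
      ∑ j, μ j * (1 - Real.exp (-((1 - ε) * (l * (α * pEdge P (K 0) (K j)))))) := by
    rw [missBound, Finset.mul_sum, ← Finset.sum_sub_distrib]
    exact Finset.sum_congr rfl fun j _ => by ring
  rw [hsum, h.sum_weight]
  linarith [Real.add_one_le_exp (-x)]

lemma one_sub_mul_le_one_sub_exp_neg {s : ℝ} (hs : 0 ≤ s) (hsε : s ≤ ε) :
    (1 - ε) * s ≤ 1 - Real.exp (-s) := by
  have hexp : Real.exp (-s) * (1 + s) ≤ 1 := by
    calc Real.exp (-s) * (1 + s) ≤ Real.exp (-s) * Real.exp s := by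
          gcongr
          linarith [Real.add_one_le_exp s]
      _ = 1 := by rw [← Real.exp_add, neg_add_cancel, Real.exp_zero]
  have hquad : Real.exp (-s) ≤ 1 - s + s ^ 2 := by
    refine le_of_mul_le_mul_right (hexp.trans ?_) (show 0 < 1 + s by linarith)
    nlinarith [pow_nonneg hs 3]
  nlinarith

lemma exists_missBound_le_exp_neg_of_le (hμ : ∀ j, 0 < μ j) (hε0 : 0 < ε) (hε1 : ε ≤ 1) :
    ∃ τ > 0, ∀ {P : ℕ} {K : Fin (r + 1) → ℕ} {α : ℝ} {l : ℕ}, Admissible μ K P α →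
      l * (α * lamb μ K P 0) ≤ τ →
      missBound μ K P α ε l ≤ Real.exp (-((1 - ε) ^ 3 * (l * (α * lamb μ K P 0)))) := by
  obtain ⟨i, hi⟩ := Finite.exists_min μ
  refine ⟨ε * μ i, mul_pos hε0 (hμ i), fun {P K α l} h hl => missBound_le_exp_neg h ?_⟩
  have hα0 := h.channel_mem.1
  have hpEdge (j : Fin (r + 1)) : 0 ≤ l * (α * pEdge P (K 0) (K j)) := by
    have := pEdge_nonneg P (K 0) (K j)
    positivity
  have hsmall (j : Fin (r + 1)) : l * (α * pEdge P (K 0) (K j)) ≤ ε := by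
    have hsingle : μ i * pEdge P (K 0) (K j) ≤ lamb μ K P 0 := by
      calc μ i * pEdge P (K 0) (K j) ≤ μ j * pEdge P (K 0) (K j) :=
            mul_le_mul_of_nonneg_right (hi j) (pEdge_nonneg ..)
        _ ≤ lamb μ K P 0 := Finset.single_le_sum (f := fun j => μ j * pEdge P (K 0) (K j))
            (fun j _ => mul_nonneg (hμ j).le (pEdge_nonneg ..)) (Finset.mem_univ j)
    refine le_of_mul_le_mul_right (le_trans ?_ hl) (hμ i)
    calc l * (α * pEdge P (K 0) (K j)) * μ i = l * (α * (μ i * pEdge P (K 0) (K j))) := by ring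
      _ ≤ l * (α * lamb μ K P 0) := by gcongr
  calc (1 - ε) ^ 3 * (l * (α * lamb μ K P 0))
      = (1 - ε) * ∑ j, μ j * ((1 - ε) * ((1 - ε) * (l * (α * pEdge P (K 0) (K j))))) := by
        simp only [lamb, Finset.mul_sum]
        exact Finset.sum_congr rfl fun j _ => by ring
    _ ≤ _ := by
        refine mul_le_mul_of_nonneg_left (Finset.sum_le_sum fun j _ => ?_) (by linarith)
        refine mul_le_mul_of_nonneg_left (one_sub_mul_le_one_sub_exp_neg ?_ ?_) (hμ j).le
        · exact mul_nonneg (by linarith) (hpEdge j)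
        · nlinarith [hpEdge j, hsmall j]

lemma exists_missBound_le_exp_neg_of_lt (hμ : ∀ j, 0 < μ j) (hε1 : ε < 1) {τ : ℝ} (hτ : 0 < τ) :
    ∃ a > 0, ∀ {P : ℕ} {K : Fin (r + 1) → ℕ} {α : ℝ} {l : ℕ}, Admissible μ K P α →
      τ < l * (α * lamb μ K P 0) → missBound μ K P α ε l ≤ Real.exp (-a) := by
  obtain ⟨i, hi⟩ := Finite.exists_min μ
  have hε1' : 0 < 1 - ε := sub_pos.mpr hε1
  have hgain : 0 < 1 - Real.exp (-((1 - ε) * τ)) :=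
    sub_pos.mpr (Real.exp_lt_one_iff.mpr (neg_lt_zero.mpr (by positivity)))
  refine ⟨(1 - ε) * (μ i * (1 - Real.exp (-((1 - ε) * τ)))),
    mul_pos hε1' (mul_pos (hμ i) hgain), fun {P K α l} h hl => missBound_le_exp_neg h ?_⟩
  have hα0 := h.channel_mem.1
  obtain ⟨j, -, hj⟩ : ∃ j ∈ Finset.univ, μ j * lamb μ K P 0 ≤ μ j * pEdge P (K 0) (K j) := by
    refine Finset.exists_le_of_sum_le Finset.univ_nonempty (le_of_eq ?_)
    rw [← Finset.sum_mul, h.sum_weight, one_mul, lamb]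
  have hjτ : τ ≤ l * (α * pEdge P (K 0) (K j)) := by
    have := le_of_mul_le_mul_left hj (hμ j)
    exact hl.le.trans (by gcongr)
  have hterm (k : Fin (r + 1)) :
      0 ≤ μ k * (1 - Real.exp (-((1 - ε) * (l * (α * pEdge P (K 0) (K k)))))) := by
    have := pEdge_nonneg P (K 0) (K k)
    refine mul_nonneg (hμ k).le (sub_nonneg.mpr (Real.exp_le_one_iff.mpr ?_))
    exact neg_nonpos.mpr (by positivity)
  gcongr
  calc μ i * (1 - Real.exp (-((1 - ε) * τ)))
      ≤ μ j * (1 - Real.exp (-((1 - ε) * (l * (α * pEdge P (K 0) (K j)))))) := by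
        gcongr
        exacts [(hμ j).le, hi j]
    _ ≤ _ := Finset.single_le_sum
        (f := fun k => μ k * (1 - Real.exp (-((1 - ε) * (l * (α * pEdge P (K 0) (K k)))))))
        (fun k _ => hterm k) (Finset.mem_univ j)

lemma missBound_le_add_exp_neg (h : Admissible μ K P α) (hε0 : 0 ≤ ε) (hε1 : ε ≤ 1) (l : ℕ) :
    missBound μ K P α ε l
      ≤ ε + Real.exp (-((1 - ε) * (l * (α * pEdge P (K 0) (K 0))))) := by
  have hα0 := h.channel_mem.1
  have := sub_nonneg.mpr hε1
  calc missBound μ K P α ε l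
      ≤ ∑ j, μ j * (ε + 1 * Real.exp (-((1 - ε) * (l * (α * pEdge P (K 0) (K 0)))))) := by
        refine Finset.sum_le_sum fun j _ => mul_le_mul_of_nonneg_left ?_ (h.weight_nonneg j)
        have := pEdge_mono_right (h.ringSize_le 0) (h.ringSize_zero_le j) (h.ringSize_le j)
        gcongr
        linarith
    _ = ε + Real.exp (-((1 - ε) * (l * (α * pEdge P (K 0) (K 0))))) := by
        rw [← Finset.sum_mul, h.sum_weight, one_mul, one_mul]

lemma choose_mul_pow_le_exp_neg_log_pow {n l : ℕ} {M x κ : ℝ} (hn : 0 < n) (hε1 : ε ≤ 1)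
    (hM : 0 ≤ M) (hl : l ≤ ε * n) (hx0 : 0 ≤ x) (hx : (1 + κ) * Real.log n ≤ (1 - ε) * (n * x))
    (hMx : M ≤ Real.exp (-(l * x))) :
    n.choose l * M ^ (n - l) ≤ Real.exp (-(κ * Real.log n)) ^ l := by
  have hn' : (0 : ℝ) < n := by exact_mod_cast hn
  have hln : l ≤ n := by
    have : (l : ℝ) ≤ n := hl.trans (mul_le_of_le_one_left hn'.le hε1)
    exact_mod_cast this
  have hchoose : (n.choose l : ℝ) ≤ Real.exp (l * Real.log n) := by
    rw [Real.exp_nat_mul, Real.exp_log hn']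
    exact_mod_cast Nat.choose_le_pow n l
  have hpow : M ^ (n - l) ≤ Real.exp (-(l * ((1 + κ) * Real.log n))) := by
    calc M ^ (n - l) ≤ Real.exp (-(l * x)) ^ (n - l) := by gcongr
      _ = Real.exp (-(l * ((n - l) * x))) := by
          rw [← Real.exp_nat_mul, Nat.cast_sub hln]
          ring_nf
      _ ≤ Real.exp (-(l * ((1 - ε) * n * x))) := by
          gcongr
          linarith
      _ ≤ Real.exp (-(l * ((1 + κ) * Real.log n))) := by
          rw [mul_assoc (1 - ε)]
          gcongr
  calc n.choose l * M ^ (n - l)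
      ≤ Real.exp (l * Real.log n) * Real.exp (-(l * ((1 + κ) * Real.log n))) := by gcongr
    _ = Real.exp (-(κ * Real.log n)) ^ l := by
        rw [← Real.exp_add, ← Real.exp_nat_mul]
        ring_nf

lemma exists_choose_le_exp {x : ℝ} (hx : 0 < x) :
    ∃ δ > (0 : ℝ), ∀ n l : ℕ, l ≤ δ * n → (n.choose l : ℝ) ≤ Real.exp (x * n) := by
  set y := x / 2 with hy
  have hy0 : 0 < y := half_pos hx
  refine ⟨y / (1 + |Real.log y|), by positivity, fun n l hl => ?_⟩
  have hbinomial : n.choose l * y ^ l ≤ Real.exp (n * y) := by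
    calc n.choose l * y ^ l ≤ (y + 1) ^ n := by
          rcases le_or_gt l n with hln | hln
          · rw [add_pow]
            refine le_trans (le_of_eq (by ring)) (Finset.single_le_sum
              (f := fun m => y ^ m * 1 ^ (n - m) * (n.choose m : ℝ)) (fun m _ => by positivity)
              (Finset.mem_range_succ_iff.mpr hln))
          · rw [Nat.choose_eq_zero_of_lt hln, Nat.cast_zero, zero_mul]
            positivity
      _ ≤ Real.exp y ^ n := by
          gcongr
          exact Real.add_one_le_exp y
      _ = Real.exp (n * y) := (Real.exp_nat_mul y n).symm
  have hinverse : (y⁻¹) ^ l ≤ Real.exp (n * y) := by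
    have hlog : l * (1 + |Real.log y|) ≤ n * y := by
      rw [div_mul_eq_mul_div, le_div_iff₀ (by positivity)] at hl
      linarith
    rw [← Real.exp_log (inv_pos.mpr hy0), ← Real.exp_nat_mul, Real.log_inv]
    refine Real.exp_le_exp.mpr ?_
    nlinarith [neg_abs_le (Real.log y), l.cast_nonneg (α := ℝ)]
  calc (n.choose l : ℝ) = n.choose l * y ^ l * (y⁻¹) ^ l := by
        rw [mul_assoc, ← mul_pow, mul_inv_cancel₀ hy0.ne', one_pow, mul_one]
    _ ≤ Real.exp (n * y) * Real.exp (n * y) := by gcongr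
    _ = Real.exp (x * n) := by
        rw [← Real.exp_add, hy]
        ring_nf

lemma choose_mul_pow_le_half_pow {n l : ℕ} {M : ℝ} (hM : 0 ≤ M) (hl : 2 * l ≤ n)
    (hM' : M ≤ 1 / 16) : n.choose l * M ^ (n - l) ≤ (1 / 2) ^ n := by
  calc n.choose l * M ^ (n - l) ≤ 2 ^ n * ((1 / 4) ^ 2) ^ (n - l) := by
        gcongr
        · exact_mod_cast Nat.choose_le_two_pow n l
        · linarith
    _ ≤ 2 ^ n * (1 / 4) ^ n := by
        rw [← pow_mul]
        gcongr ?_ * ?_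
        exact pow_le_pow_of_le_one (by norm_num) (by norm_num) (by omega)
    _ = (1 / 2) ^ n := by
        rw [← mul_pow]
        norm_num

lemma choose_mul_pow_le_exp_neg_pow {n l : ℕ} {M a : ℝ} (ha : 0 ≤ a) (hM : 0 ≤ M) (hl : 2 * l ≤ n)
    (hchoose : (n.choose l : ℝ) ≤ Real.exp (a / 4 * n)) (hMa : M ≤ Real.exp (-a)) :
    n.choose l * M ^ (n - l) ≤ Real.exp (-(a / 4)) ^ n := by
  have hl' : (2 : ℝ) * l ≤ n := by exact_mod_cast hl
  have hpow : M ^ (n - l) ≤ Real.exp (-(a / 2 * n)) := by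
    calc M ^ (n - l) ≤ Real.exp (-a) ^ (n - l) := by gcongr
      _ = Real.exp (-(a * (n - l))) := by
          rw [← Real.exp_nat_mul, Nat.cast_sub (by omega)]
          ring_nf
      _ ≤ Real.exp (-(a / 2 * n)) := Real.exp_le_exp.mpr (by nlinarith)
  calc n.choose l * M ^ (n - l) ≤ Real.exp (a / 4 * n) * Real.exp (-(a / 2 * n)) := by gcongr
    _ = Real.exp (-(a / 4)) ^ n := by
        rw [← Real.exp_add, ← Real.exp_nat_mul]
        ring_nf

lemma lamb_nonneg (h : Admissible μ K P α) (i : Fin (r + 1)) : 0 ≤ lamb μ K P i :=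
  Finset.sum_nonneg fun j _ => mul_nonneg (h.weight_nonneg j) (pEdge_nonneg ..)

lemma exists_choose_mul_missBound_pow_le (hμ : ∀ j, 0 < μ j) (hε0 : 0 < ε) (hε1 : ε ≤ 1 / 32) :
    ∃ δ > 0, ∃ ρ ∈ Set.Ico (0 : ℝ) 1, ∀ {n P : ℕ} {K : Fin (r + 1) → ℕ} {α κ : ℝ} {l : ℕ},
      Admissible μ K P α → 0 < n → (1 + κ) * Real.log n ≤ (1 - ε) ^ 4 * (n * (α * lamb μ K P 0)) →
      Real.exp (-(δ * (n * (α * pEdge P (K 0) (K 0))))) ≤ 1 / 32 → 2 * l ≤ n →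
      n.choose l * missBound μ K P α ε l ^ (n - l) ≤ Real.exp (-(κ * Real.log n)) ^ l + ρ ^ n := by
  obtain ⟨τ, hτ, hsmall⟩ := exists_missBound_le_exp_neg_of_le hμ hε0 (by linarith)
  obtain ⟨a, ha, hmedium⟩ := exists_missBound_le_exp_neg_of_lt (ε := ε) hμ (by linarith) hτ
  obtain ⟨δ, hδ, hentropy⟩ := exists_choose_le_exp (x := a / 4) (by positivity)
  have hε1' : 0 < 1 - ε := by linarith
  refine ⟨(1 - ε) * min ε δ, by positivity, max (Real.exp (-(a / 4))) (1 / 2),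
    ⟨by positivity, max_lt (Real.exp_lt_one_iff.mpr (by linarith)) (by norm_num)⟩,
    fun {n P K α κ l} h hn hlog hlarge hl => ?_⟩
  have hM := missBound_nonneg h hε0.le (by linarith) l
  have hp := pEdge_nonneg P (K 0) (K 0)
  have hα0 := h.channel_mem.1
  rcases le_or_gt (l : ℝ) (min ε δ * n) with hδl | hδl
  · rcases le_or_gt (l * (α * lamb μ K P 0)) τ with hτl | hτl
    · refine le_add_of_le_of_nonneg (choose_mul_pow_le_exp_neg_log_pow (ε := ε)
        (x := (1 - ε) ^ 3 * (α * lamb μ K P 0)) hn (by linarith) hM ?_ ?_ ?_ ?_) (by positivity)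
      · exact hδl.trans (by gcongr; exact min_le_left _ _)
      · have := lamb_nonneg h 0
        positivity
      · linarith
      · exact (hsmall h hτl).trans_eq (by ring_nf)
    · exact le_add_of_nonneg_of_le (by positivity) <|
        (choose_mul_pow_le_exp_neg_pow ha.le hM hl
          (hentropy n l (hδl.trans (by gcongr; exact min_le_right _ _))) (hmedium h hτl)).trans
        (by gcongr; exact le_max_left _ _)
  · have hexp : Real.exp (-((1 - ε) * (l * (α * pEdge P (K 0) (K 0))))) ≤ 1 / 32 := by
      refine le_trans (Real.exp_le_exp.mpr (neg_le_neg ?_)) hlarge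
      calc (1 - ε) * min ε δ * (n * (α * pEdge P (K 0) (K 0)))
          = (1 - ε) * (min ε δ * n * (α * pEdge P (K 0) (K 0))) := by ring
        _ ≤ (1 - ε) * (l * (α * pEdge P (K 0) (K 0))) := by gcongr
    have hM' := missBound_le_add_exp_neg h hε0.le (by linarith) l
    exact le_add_of_nonneg_of_le (by positivity) <|
      (choose_mul_pow_le_half_pow hM hl (by linarith)).trans (by gcongr; exact le_max_right _ _)

lemma exists_cutBound_le (hμ : ∀ j, 0 < μ j) (hε0 : 0 < ε) (hε1 : ε ≤ 1 / 32) :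
    ∃ δ > 0, ∃ ρ ∈ Set.Ico (0 : ℝ) 1, ∀ {n P : ℕ} {K : Fin (r + 1) → ℕ} {α κ : ℝ},
      Admissible μ K P α → 0 < n → (1 + κ) * Real.log n ≤ (1 - ε) ^ 4 * (n * (α * lamb μ K P 0)) →
      Real.exp (-(δ * (n * (α * pEdge P (K 0) (K 0))))) ≤ 1 / 32 →
      cutBound μ K P α n ε
        ≤ ∑ l ∈ Finset.Icc 1 (n / 2), Real.exp (-(κ * Real.log n)) ^ l + n * ρ ^ n := by
  obtain ⟨δ, hδ, ρ, hρ, hterm⟩ := exists_choose_mul_missBound_pow_le hμ hε0 hε1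
  refine ⟨δ, hδ, ρ, hρ, fun {n P K α κ} h hn hlog hlarge => ?_⟩
  calc cutBound μ K P α n ε
      ≤ ∑ l ∈ Finset.Icc 1 (n / 2), (Real.exp (-(κ * Real.log n)) ^ l + ρ ^ n) := by
        refine Finset.sum_le_sum fun l hl => hterm h hn hlog hlarge ?_
        have := (Finset.mem_Icc.mp hl).2
        omega
    _ ≤ ∑ l ∈ Finset.Icc 1 (n / 2), Real.exp (-(κ * Real.log n)) ^ l + n * ρ ^ n := by
        rw [Finset.sum_add_distrib, Finset.sum_const, Nat.card_Icc, nsmul_eq_mul]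
        have := pow_nonneg hρ.1 n
        gcongr
        omega

end CutTerms

section Asymptotics

lemma tendsto_sum_Icc_pow {ρ : ℕ → ℝ} (hρ0 : ∀ n, 0 ≤ ρ n) (hρ : Tendsto ρ atTop (nhds 0))
    (N : ℕ → ℕ) : Tendsto (fun n => ∑ l ∈ Finset.Icc 1 (N n), ρ n ^ l) atTop (nhds 0) := by
  have hlimit : Tendsto (fun n => ρ n ^ 1 / (1 - ρ n)) atTop (nhds 0) := by
    simpa [Pi.div_def] using
      (hρ.pow 1).div (hρ.const_sub 1) (by rw [sub_zero]; exact one_ne_zero)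
  refine tendsto_of_tendsto_of_tendsto_of_le_of_le' tendsto_const_nhds hlimit
    (.of_forall fun n => Finset.sum_nonneg fun l _ => pow_nonneg (hρ0 n) l) ?_
  filter_upwards [hρ.eventually_lt_const one_pos] with n hn
  exact geom_sum_Ico_le_of_lt_one (hρ0 n) hn

lemma exists_one_lt_one_sub_pow_mul {c : ℝ} (hc : 1 < c) {b : ℝ} (hb : 0 < b) (m : ℕ) :
    ∃ ε, 0 < ε ∧ ε ≤ b ∧ 1 < (1 - ε) ^ m * c := by
  have hcont : Tendsto (fun ε : ℝ => (1 - ε) ^ m * c) (nhdsWithin 0 (Set.Ioi 0)) (nhds c) := by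
    have : Continuous fun ε : ℝ => (1 - ε) ^ m * c := by fun_prop
    simpa using (this.tendsto 0).mono_left nhdsWithin_le_nhds
  obtain ⟨ε, hεc, hε⟩ := ((hcont.eventually_const_lt hc).and (Ioc_mem_nhdsGT hb)).exists
  exact ⟨ε, hε.1, hε.2, hεc⟩

variable {r : ℕ} {μ : Fin (r + 1) → ℝ} {K : ℕ → Fin (r + 1) → ℕ} {P : ℕ → ℕ} {α : ℕ → ℝ}
  {c ε σ : ℝ}

lemma mul_pEdge_le_sq {n k P : ℕ} {α : ℝ} (hα : α ∈ Set.Icc 0 1) (hσP : σ * n ≤ P)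
    (hk : k ≤ P) : σ * (n * α * pEdge P k k) ≤ (k : ℝ) ^ 2 := by
  calc σ * (n * α * pEdge P k k) = σ * n * (α * pEdge P k k) := by ring
    _ ≤ P * (1 * (k * k / P)) := by
        gcongr
        · exact mul_nonneg hα.1 (pEdge_nonneg ..)
        · exact pEdge_nonneg ..
        · exact hα.2
        · exact pEdge_le k hk
    _ = (k : ℝ) ^ 2 * (P / P) := by ring
    _ ≤ (k : ℝ) ^ 2 := mul_le_of_le_one_right (sq_nonneg _) (div_self_le_one _)

lemma tendsto_ringSize (hadm : ∀ n, Admissible μ (K n) (P n) (α n)) (hσ : 0 < σ)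
    (hP : ∀ᶠ n : ℕ in atTop, σ * n ≤ P n)
    (hp11 : Tendsto (fun n : ℕ => n * α n * pEdge (P n) (K n 0) (K n 0)) atTop atTop) :
    Tendsto (fun n => (K n 0 : ℝ)) atTop atTop := by
  refine tendsto_atTop_mono' _ ?_ (Real.tendsto_sqrt_atTop.comp (hp11.const_mul_atTop hσ))
  filter_upwards [hP] with n hPn
  exact Real.sqrt_le_iff.mpr ⟨Nat.cast_nonneg _,
    mul_pEdge_le_sq (hadm n).channel_mem hPn ((hadm n).ringSize_le 0)⟩

lemma sparseBound_nonneg (n P k : ℕ) (ε : ℝ) : 0 ≤ sparseBound n P k ε := by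
  unfold sparseBound unionBound
  positivity

lemma tendsto_sparseBound {k : ℕ → ℕ} (hε0 : 0 < ε) (hε1 : ε ≤ 1) (hσ : 0 < σ)
    (hP : ∀ᶠ n : ℕ in atTop, σ * n ≤ P n) (hk : Tendsto (fun n => (k n : ℝ)) atTop atTop) :
    Tendsto (fun n => sparseBound n (P n) (k n) ε) atTop (nhds 0) := by
  have hratio : Tendsto (fun n => Real.exp 1 / σ * Real.exp (-(2 * k n))) atTop (nhds 0) := by
    simpa using (Real.tendsto_exp_neg_atTop_nhds_zero.comp
      (hk.const_mul_atTop two_pos)).const_mul (Real.exp 1 / σ)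
  refine tendsto_of_tendsto_of_tendsto_of_le_of_le' tendsto_const_nhds
    (tendsto_sum_Icc_pow (fun n => by positivity) hratio id)
    (.of_forall fun n => sparseBound_nonneg ..) ?_
  filter_upwards [hP, (hk.const_mul_atTop hε0).eventually_ge_atTop 2, eventually_gt_atTop 0]
    with n hPn hεk hn
  have hPpos : (0 : ℝ) < P n := (mul_pos hσ (Nat.cast_pos.mpr hn)).trans_le hPn
  exact sparseBound_le hε0 hε1 hσ (Nat.cast_pos.mp hPpos) hPn hεk

lemma cutBound_nonneg {n P : ℕ} {K : Fin (r + 1) → ℕ} {α : ℝ} (h : Admissible μ K P α)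
    (hε0 : 0 ≤ ε) (hε1 : ε ≤ 1) : 0 ≤ cutBound μ K P α n ε :=
  Finset.sum_nonneg fun l _ =>
    mul_nonneg (Nat.cast_nonneg _) (pow_nonneg (missBound_nonneg h hε0 hε1 l) _)

lemma tendsto_cutBound (hadm : ∀ n, Admissible μ (K n) (P n) (α n)) (hμ : ∀ j, 0 < μ j)
    (hε0 : 0 < ε) (hε1 : ε ≤ 1 / 32) (hεc : 1 < (1 - ε) ^ 4 * c)
    (hscal : ∀ᶠ n : ℕ in atTop, c * Real.log n / n ≤ α n * lamb μ (K n) (P n) 0)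
    (hp11 : Tendsto (fun n : ℕ => n * α n * pEdge (P n) (K n 0) (K n 0)) atTop atTop) :
    Tendsto (fun n => cutBound μ (K n) (P n) (α n) n ε) atTop (nhds 0) := by
  obtain ⟨δ, hδ, ρ, hρ, hbound⟩ := exists_cutBound_le hμ hε0 hε1
  set κ := (1 - ε) ^ 4 * c - 1 with hκ
  have hlog : Tendsto (fun n : ℕ => Real.exp (-(κ * Real.log n))) atTop (nhds 0) :=
    Real.tendsto_exp_neg_atTop_nhds_zero.comp ((Real.tendsto_log_atTop.comp
      tendsto_natCast_atTop_atTop).const_mul_atTop (sub_pos.mpr hεc))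
  have hedge : ∀ᶠ n : ℕ in atTop,
      Real.exp (-(δ * (n * (α n * pEdge (P n) (K n 0) (K n 0))))) ≤ 1 / 32 := by
    have := Real.tendsto_exp_neg_atTop_nhds_zero.comp (hp11.const_mul_atTop hδ)
    simp only [mul_assoc] at this
    exact this.eventually_le_const (by norm_num)
  have hlimit : Tendsto (fun n : ℕ => ∑ l ∈ Finset.Icc 1 (n / 2), Real.exp (-(κ * Real.log n)) ^ l
      + n * ρ ^ n) atTop (nhds 0) := by
    simpa using (tendsto_sum_Icc_pow (fun n => (Real.exp_pos _).le) hlog (· / 2)).add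
      (tendsto_self_mul_const_pow_of_lt_one hρ.1 hρ.2)
  refine tendsto_of_tendsto_of_tendsto_of_le_of_le' tendsto_const_nhds hlimit
    (.of_forall fun n => cutBound_nonneg (hadm n) hε0.le (by linarith)) ?_
  filter_upwards [hscal, hedge, eventually_gt_atTop 0] with n hscaln hedgen hn
  refine hbound (hadm n) hn ?_ hedgen
  rw [div_le_iff₀' (Nat.cast_pos.mpr hn)] at hscaln
  calc (1 + κ) * Real.log n = (1 - ε) ^ 4 * (c * Real.log n) := by rw [hκ]; ring
    _ ≤ (1 - ε) ^ 4 * (n * (α n * lamb μ (K n) (P n) 0)) := by gcongr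

end Asymptotics

theorem connectivity_one_law_general {r : ℕ} (μ : Fin (r + 1) → ℝ)
    (hμpos : ∀ i, 0 < μ i) (hμsum : ∑ i, μ i = 1)
    (K : ℕ → Fin (r + 1) → ℕ) (P : ℕ → ℕ) (α : ℕ → ℝ)
    (hKmin : ∀ n j, K n 0 ≤ K n j) (hKP : ∀ n j, K n j ≤ P n)
    (hα : ∀ n, α n ∈ Set.Icc (0 : ℝ) 1)
    (c : ℝ) (hc : 1 < c)
    (hscal : ∀ᶠ n : ℕ in atTop, c * Real.log n / n ≤ α n * lamb μ (K n) (P n) 0)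
    (σ : ℝ) (hσ : 0 < σ) (hP : ∀ᶠ n : ℕ in atTop, σ * n ≤ P n)
    (hp11 : Tendsto (fun n : ℕ => n * α n * pEdge (P n) (K n 0) (K n 0)) atTop atTop) :
    Tendsto (fun n => pr μ (K n) (α n) (fun cfg : Config n r (P n) => (graphOf cfg).Connected))
      atTop (nhds 1) := by
  have hadm (n : ℕ) : Admissible μ (K n) (P n) (α n) :=
    ⟨fun j => (hμpos j).le, hμsum, hα n, hKmin n, hKP n⟩
  obtain ⟨ε, hε0, hε1, hεc⟩ := exists_one_lt_one_sub_pow_mul hc (by norm_num : (0 : ℝ) < 1 / 32) 4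
  have hK := tendsto_ringSize hadm hσ hP hp11
  have hring : ∀ᶠ n in atTop, Real.exp (-(Real.exp (-(8 / ε)) * K n 0)) ≤ ε :=
    (Real.tendsto_exp_neg_atTop_nhds_zero.comp
      (hK.const_mul_atTop (Real.exp_pos _))).eventually_le_const hε0
  have hbound := (tendsto_sparseBound hε0 (by linarith) hσ hP hK).add
    (tendsto_cutBound hadm hμpos hε0 hε1 hεc hscal hp11)
  have hdisconnected : Tendsto (fun n => pr μ (K n) (α n)
      (fun cfg : Config n r (P n) => ¬ (graphOf cfg).Connected)) atTop (nhds 0) := by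
    refine tendsto_of_tendsto_of_tendsto_of_le_of_le' tendsto_const_nhds (by simpa using hbound)
      (.of_forall fun n => pr_nonneg (hadm n) _) ?_
    filter_upwards [hring, eventually_gt_atTop 0] with n hringn hn
    exact pr_not_connected_le (hadm n) hn (by linarith) hringn
  simpa only [← eq_sub_of_add_eq (pr_add_pr_not (hadm _) _), sub_zero]
    using hdisconnected.const_sub 1

/-- one-law for connectivity:
under the scaling `Λ₁(n) = αₙ λ₁(n) = cₙ log n / n` with `cₙ → c > 1`, together with
`Pₙ ≥ σ n` for some `σ > 0` and `p₁₁(n) = ω(1/(n αₙ))`, the probability that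
`G(n; μ, Kₙ, Pₙ, αₙ)` is connected tends to `1`. -/
theorem connectivity_one_law {r : ℕ} (μ : Fin (r + 1) → ℝ)
    (hμpos : ∀ i, 0 < μ i) (hμsum : ∑ i, μ i = 1)
    (K : ℕ → Fin (r + 1) → ℕ) (P : ℕ → ℕ) (α : ℕ → ℝ)
    (hK1 : ∀ n, 1 ≤ K n 0) (hKmono : ∀ n, Monotone (K n))
    (hKP : ∀ n, 2 * K n (Fin.last r) ≤ P n)
    (hα : ∀ n, α n ∈ Set.Ioo (0 : ℝ) 1)
    (cseq : ℕ → ℝ) (c : ℝ)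
    (hscal : ∀ n, 2 ≤ n → α n * lamb μ (K n) (P n) 0 = cseq n * Real.log n / n)
    (hc : Tendsto cseq atTop (nhds c)) (hcgt : 1 < c)
    (σ : ℝ) (hσ : 0 < σ) (hP : ∀ n, σ * n ≤ (P n : ℝ))
    (hp11 : Tendsto (fun n : ℕ => (n : ℝ) * α n * pEdge (P n) (K n 0) (K n 0)) atTop atTop) :
    Tendsto (fun n => pr μ (K n) (α n) (fun cfg : Config n r (P n) => (graphOf cfg).Connected))
      atTop (nhds 1) := by
  obtain ⟨c', hc', hc'c⟩ := exists_between hcgt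
  refine connectivity_one_law_general μ hμpos hμsum K P α (fun n j => hKmono n (Fin.zero_le j))
    (fun n j => ?_) (fun n => Set.Ioo_subset_Icc_self (hα n)) c' hc' ?_ σ hσ (.of_forall hP) hp11
  · have := hKmono n (Fin.le_last j)
    linarith [hKP n]
  · filter_upwards [hc.eventually_const_le hc'c, eventually_ge_atTop 2] with n hcn hn
    rw [hscal n hn]
    gcongr
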